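/- Let s be a complex number with 0 < Re(s) < 1. Then π^{-s/2}·Γ(s/2)·ζ(s) = 2^{s/2}·Γ(s/2)·e^{-iπ(1-s)/4}·∫_{-1/2 ↘ 1/2} (e^{-iπu² + iπu}/(2i·cos(πu)))·(1/Γ(s))·(∫_0^∞ e^{-w²/2 - √(2π)·e^{iπ/4}·u·w}·w^{s-1} dw) du + 2^{(1-s)/2}·Γ((1-s)/2)·e^{iπs/4}·∫_{-1/2 ↙ 1/2} (e^{iπu² - iπu}/(2i·cos(πu)))·(1/Γ(1-s))·(∫_0^∞ e^{-w²/2 - √(2π)·e^{-iπ/4}·u·w}·w^{-s} dw) du. (Here the parabolic cylinder functions U(s-1/2, √(2π)e^{iπ/4}u) and U(1/2-s, √(2π)e^{-iπ/4}u) appearing in the Riemann–Siegel integral formula have been written via their real integral representations, which is valid since Re(s-1/2) > -1/2 and Re(1/2-s) > -1/2.) -/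

import Mathlib

open scoped Real
open MeasureTheory Set Complex

/-- Integral along the straight line `t ↦ c + e^{iθ} t`, `t ∈ ℝ`. -/
noncomputable def lineInt (c θ : ℝ) (f : ℂ → ℂ) : ℂ :=
  ∫ t : ℝ, f ((c : ℂ) + Complex.exp ((θ : ℂ) * Complex.I) * (t : ℂ)) *
    Complex.exp ((θ : ℂ) * Complex.I)

lemma integrable_exp_neg_abs {δ : ℝ} (hδ : 0 < δ) :
    Integrable (fun x : ℝ => Real.exp (-δ * |x|)) := by
  rw [← integrableOn_univ, ← Iic_union_Ioi (a := (0:ℝ))]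
  refine IntegrableOn.union ?_ ?_
  · refine (integrableOn_exp_mul_Iic hδ 0).congr_fun ?_ measurableSet_Iic
    intro x hx
    simp only [mem_Iic] at hx
    simp [abs_of_nonpos hx]
  · refine (integrableOn_exp_mul_Ioi (a := -δ) (by linarith) 0).congr_fun ?_ measurableSet_Ioi
    intro x hx
    simp only [mem_Ioi] at hx
    simp [abs_of_pos hx]

/-- Shifting a horizontal line of integration. -/
lemma strip_shift (f : ℂ → ℂ) (α β C δ : ℝ) (hδ : 0 < δ)
    (hf : DifferentiableOn ℂ f {z | z.im ∈ uIcc α β})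
    (hC : ∀ z : ℂ, z.im ∈ uIcc α β → ‖f z‖ ≤ C * Real.exp (-δ * |z.re|)) :
    ∫ t : ℝ, f (t + α * I) = ∫ t : ℝ, f (t + β * I) := by
  have hint : ∀ γ ∈ uIcc α β, Integrable (fun t : ℝ => f (t + γ * I)) := by
    intro γ hγ
    refine ((integrable_exp_neg_abs hδ).const_mul C).mono' ?_ ?_
    · apply Continuous.aestronglyMeasurable
      have : ContinuousOn f {z | z.im ∈ uIcc α β} := hf.continuousOn
      refine this.comp_continuous (by fun_prop) ?_
      intro x; simpa using hγ
    · refine Filter.Eventually.of_forall fun t => ?_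
      simpa using hC (t + γ * I) (by simpa using hγ)
  have key : ∀ T : ℝ, (∫ x : ℝ in (-T)..T, f (x + α * I)) - (∫ x : ℝ in (-T)..T, f (x + β * I)) =
      I * (∫ y : ℝ in α..β, f (-T + y * I)) - I * (∫ y : ℝ in α..β, f (T + y * I)) := by
    intro T
    have := integral_boundary_rect_eq_zero_of_differentiableOn f (-T + α * I) (T + β * I)
      (hf.mono (fun z hz => by
        have := hz.2
        simpa using this))
    simp at this
    linear_combination this
  have hv : ∀ T : ℝ, ‖∫ y : ℝ in α..β, f (T + y * I)‖ ≤ C * Real.exp (-δ * |T|) * |β - α| := by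
    intro T
    apply intervalIntegral.norm_integral_le_of_norm_le_const
    intro y hy
    simpa using hC (T + y * I) (by simpa using uIoc_subset_uIcc hy)
  have lim0 : Filter.Tendsto (fun T : ℝ => C * Real.exp (-δ * |T|) * |β - α|) Filter.atTop (nhds 0) := by
    have : Filter.Tendsto (fun T : ℝ => Real.exp (-δ * |T|)) Filter.atTop (nhds 0) := by
      apply Real.tendsto_exp_atBot.comp
      exact Filter.tendsto_abs_atTop_atTop.const_mul_atTop_of_neg (by linarith)
    simpa using (this.const_mul C).mul_const |β - α|
  have l1 : Filter.Tendsto (fun T : ℝ => ∫ y : ℝ in α..β, f (T + y * I)) Filter.atTop (nhds 0) :=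
    squeeze_zero_norm hv lim0
  have l2 : Filter.Tendsto (fun T : ℝ => ∫ y : ℝ in α..β, f (-T + y * I)) Filter.atTop (nhds 0) := by
    refine squeeze_zero_norm (fun T => ?_) lim0
    simpa using hv (-T)
  have r := (l2.const_mul I).sub (l1.const_mul I)
  have a1 := intervalIntegral_tendsto_integral (hint α left_mem_uIcc) Filter.tendsto_neg_atTop_atBot
    Filter.tendsto_id
  have a2 := intervalIntegral_tendsto_integral (hint β right_mem_uIcc) Filter.tendsto_neg_atTop_atBot
    Filter.tendsto_id
  have := a1.sub a2
  simp only [id, key] at this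
  have := tendsto_nhds_unique this r
  simp at this
  exact sub_eq_zero.mp this

noncomputable def qa : ℂ := Complex.exp ((π : ℂ) * I / 4)

lemma qa_eq : qa = ((Real.sqrt 2 / 2 : ℝ) : ℂ) + ((Real.sqrt 2 / 2 : ℝ) : ℂ) * I := by
  have : (π : ℂ) * I / 4 = ((π / 4 : ℝ) : ℂ) * I := by push_cast; ring
  rw [qa, this, exp_mul_I, ← ofReal_cos, ← ofReal_sin, Real.cos_pi_div_four, Real.sin_pi_div_four]

lemma qa_re : qa.re = Real.sqrt 2 / 2 := by rw [qa_eq]; simp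
lemma qa_im : qa.im = Real.sqrt 2 / 2 := by rw [qa_eq]; simp
lemma qa_sq : qa ^ 2 = I := by
  rw [qa, ← Complex.exp_nat_mul]
  have : ((2 : ℕ) : ℂ) * ((π : ℂ) * I / 4) = π / 2 * I := by push_cast; ring
  rw [this, Complex.exp_pi_div_two_mul_I]
lemma qa_mul : qa * qa = I := by rw [← sq, qa_sq]
lemma qa_ne : qa ≠ 0 := Complex.exp_ne_zero _
lemma qa_norm : ‖qa‖ = 1 := by
  have : (π : ℂ) * I / 4 = ((π / 4 : ℝ) : ℂ) * I := by push_cast; ring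
  rw [qa, this, norm_exp_ofReal_mul_I]

lemma sqrt2_bounds : 1.4 < Real.sqrt 2 ∧ Real.sqrt 2 < 1.5 := by
  constructor
  · rw [Real.lt_sqrt] <;> norm_num
  · rw [Real.sqrt_lt'] <;> norm_num

lemma norm_sinh_ge (w : ℂ) : |Real.sinh w.re| ≤ ‖Complex.sinh w‖ := by
  have h : ‖Complex.exp w - Complex.exp (-w)‖ ≥ |Real.exp w.re - Real.exp (-w.re)| := by
    have := abs_norm_sub_norm_le (Complex.exp w) (Complex.exp (-w))
    simpa [Complex.norm_exp] using this
  rw [Complex.sinh, Real.sinh_eq, norm_div, abs_div]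
  simp
  linarith

lemma abs_le_abs_sinh (x : ℝ) : |x| ≤ |Real.sinh x| := by
  rcases le_total 0 x with h | h
  · rw [abs_of_nonneg h, abs_of_nonneg (Real.sinh_nonneg_iff.mpr h)]
    exact Real.self_le_sinh_iff.mpr h
  · rw [abs_of_nonpos h, abs_of_nonpos (Real.sinh_nonpos_iff.mpr h)]
    have := Real.sinh_le_self_iff.mpr h
    linarith

lemma norm_sinh_ge_abs (w : ℂ) : |w.re| ≤ ‖Complex.sinh w‖ :=
  (abs_le_abs_sinh _).trans (norm_sinh_ge w)

lemma qa_mul_re (z : ℂ) : ((π : ℂ) * qa * z).re = π * (Real.sqrt 2 / 2) * (z.re - z.im) := by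
  simp [qa_re, qa_im]; ring

lemma norm_sinh_qa_ge (z : ℂ) (h : 1 ≤ |z.re - z.im|) : 1 ≤ ‖Complex.sinh (π * qa * z)‖ := by
  refine le_trans ?_ (norm_sinh_ge_abs _)
  rw [qa_mul_re, abs_mul, abs_of_pos (by positivity : 0 < π * (Real.sqrt 2 / 2))]
  have := sqrt2_bounds.1
  have := Real.pi_gt_three
  have h2 : 1 ≤ π * (Real.sqrt 2 / 2) := by nlinarith
  nlinarith

lemma sinh_qa_eq_zero {z : ℂ} (h : Complex.sinh (π * qa * z) = 0) (hz : |z.im| < Real.sqrt 2 / 2) :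
    z = 0 := by
  have h1 : Complex.sin (π * qa * z * I) = 0 := by rw [Complex.sin_mul_I, h, zero_mul]
  obtain ⟨k, hk⟩ := Complex.sin_eq_zero_iff.mp h1
  have hpi : (π : ℂ) ≠ 0 := by exact_mod_cast Real.pi_ne_zero
  have h2 : z = -(k : ℂ) * qa := by
    have : qa * z * I = k := by
      apply mul_left_cancel₀ hpi
      linear_combination hk
    have h3 : qa * (qa * z * I) = -z := by
      have : qa * (qa * z * I) = (qa * qa) * z * I := by ring
      rw [this, qa_mul]
      linear_combination z * I_mul_I
    rw [this] at h3
    linear_combination h3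
  have h4 : z.im = -(k : ℝ) * (Real.sqrt 2 / 2) := by
    rw [h2]; simp [qa_im]
  have hk0 : k = 0 := by
    rw [h4, abs_mul, abs_of_pos (by positivity : 0 < Real.sqrt 2 / 2), abs_neg] at hz
    have : |(k : ℝ)| < 1 := by
      have : 0 < Real.sqrt 2 / 2 := by positivity
      nlinarith
    have : |k| < 1 := by exact_mod_cast this
    exact Int.abs_lt_one_iff.mp this
  rw [h2, hk0]; simp

lemma gauss_bound (ρ : ℂ) : ∃ K : ℝ, 0 ≤ K ∧ ∀ z : ℂ, |z.im| ≤ 1 →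
    ‖Complex.exp (-π * z ^ 2) * Complex.exp (2 * π * I * z * ρ)‖ ≤ K * Real.exp (-1 * |z.re|) := by
  set R : ℝ := 2 * π * ‖ρ‖ + 1
  refine ⟨Real.exp (π + R + R ^ 2), (Real.exp_pos _).le, fun z hz => ?_⟩
  rw [← Complex.exp_add, Complex.norm_exp, ← Real.exp_add]
  apply Real.exp_le_exp.mpr
  have h1 : (2 * π * I * z * ρ).re ≤ 2 * π * ‖ρ‖ * (|z.re| + 1) := by
    refine (Complex.re_le_norm _).trans ?_
    have : ‖z‖ ≤ |z.re| + 1 := (Complex.norm_le_abs_re_add_abs_im z).trans (by linarith)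
    simp only [norm_mul, norm_I, Complex.norm_real, Complex.norm_ofNat, Real.norm_eq_abs, abs_of_pos Real.pi_pos]
    have h0 := norm_nonneg ρ
    have := mul_le_mul_of_nonneg_left this (by positivity : 0 ≤ 2 * π * ‖ρ‖)
    linarith
  have h2 : (-π * z ^ 2 : ℂ).re = -π * (z.re ^ 2 - z.im ^ 2) := by
    simp [sq]
  rw [Complex.add_re, h2]
  have h3 : z.im ^ 2 ≤ 1 := by
    rw [← sq_abs]; have := abs_nonneg z.im; nlinarith
  have h4 : z.re ^ 2 = |z.re| ^ 2 := (sq_abs _).symm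
  have h5 : R * |z.re| ≤ π * |z.re| ^ 2 + R ^ 2 := by
    have := Real.pi_gt_three
    nlinarith [sq_nonneg (R - |z.re|), sq_nonneg (R + |z.re|), sq_nonneg (|z.re|), sq_nonneg R]
  have h6 : (R - 1) = 2 * π * ‖ρ‖ := by simp [R]
  rw [← h6] at h1
  rw [h4]
  have := Real.pi_pos
  nlinarith

/-- Mordell integrand. -/
noncomputable def Gf (ρ z : ℂ) : ℂ :=
  Complex.exp (-π * z ^ 2) * Complex.exp (2 * π * I * z * ρ) / Complex.sinh (π * qa * z)

noncomputable def Hf (ρ z : ℂ) : ℂ :=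
  Complex.exp (-π * z ^ 2) * dslope (fun z => Complex.exp (2 * π * I * z * ρ)) 0 z /
    dslope (fun z => Complex.sinh (π * qa * z)) 0 z

lemma Hf_eq {ρ z : ℂ} (hz : z ≠ 0) : Hf ρ z = Gf ρ z - Gf 0 z := by
  rw [Hf, Gf, Gf, dslope_of_ne _ hz, dslope_of_ne _ hz, slope_def_field, slope_def_field]
  simp
  by_cases h : Complex.sinh (π * qa * z) = 0
  · simp [h]
  · field_simp

lemma dslope_sinh_ne {z : ℂ} (hz : |z.im| < Real.sqrt 2 / 2) :
    dslope (fun z => Complex.sinh (π * qa * z)) 0 z ≠ 0 := by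
  by_cases h0 : z = 0
  · subst h0
    rw [dslope_same]
    have : HasDerivAt (fun z => Complex.sinh (π * qa * z)) (Complex.cosh (π * qa * 0) * (π * qa * 1)) 0 :=
      ((hasDerivAt_id (0:ℂ)).const_mul (π * qa)).csinh
    rw [this.deriv]
    simp [qa_ne]
  · rw [dslope_of_ne _ h0, slope_def_field]
    simp only [mul_zero, Complex.sinh_zero, sub_zero]
    intro h
    rcases div_eq_zero_iff.mp h with h | h
    · exact h0 (sinh_qa_eq_zero h hz)
    · exact h0 h

lemma Hf_diff (ρ : ℂ) : DifferentiableOn ℂ (Hf ρ) {z | |z.im| < Real.sqrt 2 / 2} := by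
  have d1 : Differentiable ℂ (dslope (fun z => Complex.exp (2 * π * I * z * ρ)) 0) := by
    rw [← differentiableOn_univ, Complex.differentiableOn_dslope Filter.univ_mem]
    exact Differentiable.differentiableOn (by fun_prop)
  have d2 : Differentiable ℂ (dslope (fun z => Complex.sinh (π * qa * z)) 0) := by
    rw [← differentiableOn_univ, Complex.differentiableOn_dslope Filter.univ_mem]
    exact Differentiable.differentiableOn (by fun_prop)
  unfold Hf
  refine DifferentiableOn.div ?_ d2.differentiableOn ?_
  · exact Differentiable.differentiableOn (Differentiable.mul (by fun_prop) d1)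
  · intro z hz; exact dslope_sinh_ne hz

lemma Hf_bound (ρ : ℂ) (η : ℝ) (hη : η < Real.sqrt 2 / 2) : ∃ C : ℝ, ∀ z : ℂ, |z.im| ≤ η →
    ‖Hf ρ z‖ ≤ C * Real.exp (-1 * |z.re|) := by
  obtain ⟨K, hK0, hK⟩ := gauss_bound ρ
  obtain ⟨K', hK0', hK'⟩ := gauss_bound 0
  have hcomp : IsCompact (Icc (-2 : ℝ) 2 ×ℂ Icc (-η) η) := isCompact_Icc.reProdIm isCompact_Icc
  obtain ⟨M, hM⟩ := hcomp.exists_bound_of_continuousOn (f := Hf ρ) ((Hf_diff ρ).continuousOn.mono (by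
    intro z hz
    have := abs_le.mpr hz.2
    exact lt_of_le_of_lt this hη))
  have hs := sqrt2_bounds.2
  refine ⟨K + K' + |M| * Real.exp 2, fun z hz => ?_⟩
  have he := Real.exp_pos (-1 * |z.re|)
  by_cases hx : |z.re| ≤ 2
  · have h1 := hM z ⟨abs_le.mp hx, abs_le.mp hz⟩
    have h2 : 1 ≤ Real.exp 2 * Real.exp (-1 * |z.re|) := by
      rw [← Real.exp_add]; apply Real.one_le_exp; linarith
    have h3 := le_abs_self M
    have h4 : |M| * 1 ≤ |M| * (Real.exp 2 * Real.exp (-1 * |z.re|)) :=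
      mul_le_mul_of_nonneg_left h2 (abs_nonneg M)
    nlinarith [mul_nonneg hK0 he.le, mul_nonneg hK0' he.le]
  · push Not at hx
    have hz0 : z ≠ 0 := by rintro rfl; simp at hx; linarith
    have hz1 : |z.im| ≤ 1 := by linarith
    have hge : 1 ≤ ‖Complex.sinh (π * qa * z)‖ := by
      apply norm_sinh_qa_ge
      have := abs_sub_abs_le_abs_sub z.re z.im
      linarith
    rw [Hf_eq hz0, Gf, Gf]
    have g1 := hK z hz1
    have g2 := hK' z hz1
    refine (norm_sub_le _ _).trans ?_
    rw [norm_div, norm_div]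
    have := div_le_self (norm_nonneg (Complex.exp (-π * z ^ 2) * Complex.exp (2 * π * I * z * ρ))) hge
    have := div_le_self (norm_nonneg (Complex.exp (-π * z ^ 2) * Complex.exp (2 * π * I * z * 0))) hge
    have : 0 ≤ |M| * Real.exp 2 * Real.exp (-1 * |z.re|) := by positivity
    linarith

lemma line_eq (t β : ℝ) : (t : ℂ) + β * qa =
    ((t + β * (Real.sqrt 2 / 2) : ℝ) : ℂ) + ((β * (Real.sqrt 2 / 2) : ℝ) : ℂ) * I := by
  rw [qa_eq]; push_cast; ring

lemma line_im (t β : ℝ) : ((t : ℂ) + β * qa).im = β * (Real.sqrt 2 / 2) := by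
  rw [line_eq]; simp
lemma line_re (t β : ℝ) : ((t : ℂ) + β * qa).re = t + β * (Real.sqrt 2 / 2) := by
  rw [line_eq]; simp

lemma line_im_abs {t β : ℝ} (hβ : |β| < 1) : |((t : ℂ) + β * qa).im| < Real.sqrt 2 / 2 := by
  rw [line_im, abs_mul, abs_of_pos (by positivity : 0 < Real.sqrt 2 / 2)]
  have : 0 < Real.sqrt 2 / 2 := by positivity
  nlinarith

lemma Hf_shift (ρ : ℂ) {β β' : ℝ} (hβ : |β| < 1) (hβ' : |β'| < 1) :
    ∫ t : ℝ, Hf ρ (t + β * qa) = ∫ t : ℝ, Hf ρ (t + β' * qa) := by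
  have tr : ∀ β : ℝ, ∫ t : ℝ, Hf ρ (t + β * qa) = ∫ t : ℝ, Hf ρ (t + ((β * (Real.sqrt 2 / 2) : ℝ) : ℂ) * I) := by
    intro β
    simp_rw [line_eq]
    exact integral_add_right_eq_self (fun t : ℝ => Hf ρ (t + ((β * (Real.sqrt 2 / 2) : ℝ) : ℂ) * I)) _
  rw [tr, tr]
  have hs : 0 < Real.sqrt 2 / 2 := by positivity
  set η := max |β * (Real.sqrt 2 / 2)| |β' * (Real.sqrt 2 / 2)| with hηdef
  have hη : η < Real.sqrt 2 / 2 := by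
    apply max_lt
    · rw [abs_mul, abs_of_pos hs]; nlinarith
    · rw [abs_mul, abs_of_pos hs]; nlinarith
  have hsub : ∀ y ∈ uIcc (β * (Real.sqrt 2 / 2)) (β' * (Real.sqrt 2 / 2)), |y| ≤ η := by
    intro y hy
    obtain ⟨C1, C2⟩ := abs_le.mp (le_max_left |β * (Real.sqrt 2 / 2)| |β' * (Real.sqrt 2 / 2)|)
    obtain ⟨D1, D2⟩ := abs_le.mp (le_max_right |β * (Real.sqrt 2 / 2)| |β' * (Real.sqrt 2 / 2)|)
    rw [abs_le]
    rcases mem_uIcc.mp hy with ⟨h1, h2⟩ | ⟨h1, h2⟩ <;> constructor <;> linarith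
  obtain ⟨C, hC⟩ := Hf_bound ρ η hη
  refine strip_shift (Hf ρ) _ _ C 1 one_pos ?_ ?_
  · exact (Hf_diff ρ).mono (fun z hz => lt_of_le_of_lt (hsub _ hz) hη)
  · intro z hz; exact hC z (hsub _ hz)

lemma sinh_line_ne {β : ℝ} (hβ0 : β ≠ 0) (hβ : |β| < 1) (t : ℝ) :
    Complex.sinh (π * qa * (t + β * qa)) ≠ 0 := by
  intro h
  have := sinh_qa_eq_zero h (line_im_abs hβ)
  have := congrArg Complex.im this
  rw [line_im] at this
  simp [hβ0] at this

lemma inv_sinh_line_cont {β : ℝ} (hβ0 : β ≠ 0) (hβ : |β| < 1) :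
    Continuous (fun t : ℝ => (Complex.sinh (π * qa * (t + β * qa)))⁻¹) :=
  Continuous.inv₀ (by fun_prop) (sinh_line_ne hβ0 hβ)

lemma inv_sinh_line_bound {β : ℝ} (hβ0 : β ≠ 0) (hβ : |β| < 1) : ∃ K : ℝ, 0 ≤ K ∧ ∀ t : ℝ,
    ‖(Complex.sinh (π * qa * (t + β * qa)))⁻¹‖ ≤ K := by
  obtain ⟨M, hM⟩ := (isCompact_Icc (a := (-1:ℝ)) (b := 1)).exists_bound_of_continuousOn
    (inv_sinh_line_cont hβ0 hβ).continuousOn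
  refine ⟨max 1 M, le_trans zero_le_one (le_max_left _ _), fun t => ?_⟩
  by_cases ht : |t| ≤ 1
  · exact (hM t (abs_le.mp ht)).trans (le_max_right _ _)
  · push Not at ht
    have : 1 ≤ ‖Complex.sinh (π * qa * (t + β * qa))‖ := by
      apply norm_sinh_qa_ge
      rw [line_re, line_im]
      simpa using ht.le
    rw [norm_inv]
    exact (inv_le_one_of_one_le₀ this).trans (le_max_left _ _)

lemma Gf_integrable (ρ : ℂ) {β : ℝ} (hβ0 : β ≠ 0) (hβ : |β| < 1) :
    Integrable (fun t : ℝ => Gf ρ (t + β * qa)) := by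
  obtain ⟨K, hK0, hK⟩ := gauss_bound ρ
  obtain ⟨M, hM0, hM⟩ := inv_sinh_line_bound hβ0 hβ
  have hi := ((integrable_exp_neg_abs one_pos).const_mul (K * M)).comp_add_right (β * (Real.sqrt 2 / 2))
  refine hi.mono' ?_ ?_
  · apply Continuous.aestronglyMeasurable
    unfold Gf
    simp_rw [div_eq_mul_inv]
    exact Continuous.mul (by fun_prop) (inv_sinh_line_cont hβ0 hβ)
  · refine Filter.Eventually.of_forall fun t => ?_
    rw [Gf, div_eq_mul_inv, norm_mul]
    have him : |((t : ℂ) + β * qa).im| ≤ 1 := by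
      have := line_im_abs (t := t) hβ
      have := sqrt2_bounds.2
      linarith
    have h1 := hK _ him
    rw [line_re] at h1
    have h2 := mul_le_mul h1 (hM t) (norm_nonneg _) (by positivity)
    refine h2.trans (le_of_eq ?_)
    ring

noncomputable def Xf (β : ℝ) (ρ : ℂ) : ℂ := ∫ t : ℝ, Gf ρ (t + β * qa)

lemma line_ne {β : ℝ} (hβ0 : β ≠ 0) (t : ℝ) : (t : ℂ) + β * qa ≠ 0 := by
  intro h
  have := congrArg Complex.im h
  rw [line_im] at this
  simp [hβ0] at this

lemma int_Hf (ρ : ℂ) {β : ℝ} (hβ0 : β ≠ 0) (hβ : |β| < 1) :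
    ∫ t : ℝ, Hf ρ (t + β * qa) = Xf β ρ - Xf β 0 := by
  rw [Xf, Xf, ← integral_sub (Gf_integrable ρ hβ0 hβ) (Gf_integrable 0 hβ0 hβ)]
  congr 1; ext t
  rw [Hf_eq (line_ne hβ0 t)]

lemma exp_sinh_aux {w : ℂ} (h : Complex.sinh w ≠ 0) :
    Complex.exp (-2 * w) / Complex.sinh w = 1 / Complex.sinh w - 2 * Complex.exp (-w) := by
  field_simp
  rw [Complex.sinh]
  have h2 : Complex.exp w * Complex.exp (-w) = 1 := by rw [← Complex.exp_add]; simp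
  have h1' : Complex.exp (-(2 * w)) = Complex.exp (-w) * Complex.exp (-w) := by
    rw [← Complex.exp_add]; congr 1; ring
  rw [h1']
  linear_combination h2

lemma Gf_add_qa (ρ z : ℂ) (h : Complex.sinh (π * qa * z) ≠ 0) :
    Gf ρ (z + qa) = Complex.exp (2 * π * I * qa * ρ) *
      (Gf ρ z - 2 * Complex.exp (-π * z ^ 2 + (-π * qa + 2 * π * I * ρ) * z)) := by
  have e1 : Complex.sinh (π * qa * (z + qa)) = - Complex.sinh (π * qa * z) := by
    have : π * qa * (z + qa) = π * qa * z + π * I := by linear_combination π * qa_mul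
    rw [this, Complex.sinh_add]
    simp [Complex.sinh_mul_I, Complex.cosh_mul_I]
  have e2 : Complex.exp (-π * (z + qa) ^ 2) =
      - (Complex.exp (-π * z ^ 2) * Complex.exp (-2 * (π * qa * z))) := by
    have : -π * (z + qa) ^ 2 = -π * z ^ 2 + -2 * (π * qa * z) + -(π * I) := by
      linear_combination -π * qa_mul
    rw [this, Complex.exp_add, Complex.exp_add, Complex.exp_neg (π * I), Complex.exp_pi_mul_I]
    norm_num
  have e3 : Complex.exp (2 * π * I * (z + qa) * ρ) =
      Complex.exp (2 * π * I * qa * ρ) * Complex.exp (2 * π * I * z * ρ) := by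
    rw [← Complex.exp_add]; congr 1; ring
  have e4 : Complex.exp (-π * z ^ 2 + (-π * qa + 2 * π * I * ρ) * z) =
      Complex.exp (-π * z ^ 2) * Complex.exp (2 * π * I * z * ρ) * Complex.exp (-(π * qa * z)) := by
    rw [← Complex.exp_add, ← Complex.exp_add]; congr 1; ring
  have e5 := exp_sinh_aux h
  rw [Gf, Gf, e1, e2, e3, e4]
  have : Complex.exp (-π * z ^ 2) * Complex.exp (2 * π * I * z * ρ) / Complex.sinh (π * qa * z) =
    Complex.exp (-π * z ^ 2) * Complex.exp (2 * π * I * z * ρ) * (1 / Complex.sinh (π * qa * z)) := by ring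
  rw [this]
  have e6 : 1 / Complex.sinh (π * qa * z) = Complex.exp (-2 * (π * qa * z)) / Complex.sinh (π * qa * z)
     + 2 * Complex.exp (-(π * qa * z)) := by rw [e5]; ring
  rw [e6]
  field_simp
  ring

lemma gauss_line (β : ℝ) (e : ℂ) :
    Integrable (fun t : ℝ => Complex.exp (-π * (t + β * qa) ^ 2 + 2 * π * e * (t + β * qa))) ∧
    ∫ t : ℝ, Complex.exp (-π * (t + β * qa) ^ 2 + 2 * π * e * (t + β * qa)) =
      Complex.exp (π * e ^ 2) := by
  have hb : (-π : ℂ).re < 0 := by simp [Real.pi_pos]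
  have hpi : (π : ℂ) ≠ 0 := by exact_mod_cast Real.pi_ne_zero
  have e1 : ∀ t : ℝ, -π * (t + β * qa) ^ 2 + 2 * π * e * (t + β * qa) =
    (-π) * (t:ℂ) ^ 2 + (2 * π * (e - β * qa)) * t + (-π * (β * qa) ^ 2 + 2 * π * e * (β * qa)) := by
    intro t; ring
  simp_rw [e1]
  refine ⟨integrable_cexp_quadratic' hb _ _, ?_⟩
  rw [integral_cexp_quadratic hb]
  rw [neg_neg, div_self hpi, one_cpow, one_mul]
  congr 1
  field_simp
  ring

lemma Xf_add_one (ρ : ℂ) {β : ℝ} (h0 : -1 < β) (h1 : β < 0) :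
    Xf (β + 1) ρ = Complex.exp (2 * π * I * qa * ρ) *
      (Xf β ρ - 2 * (qa * Complex.exp (-π * ρ ^ 2 - π * I * qa * ρ))) := by
  have hβ : |β| < 1 := abs_lt.mpr ⟨h0, by linarith⟩
  obtain ⟨gi, gv⟩ := gauss_line β (-qa / 2 + I * ρ)
  have hpt : ∀ t : ℝ, Gf ρ (t + (β + 1 : ℝ) * qa) = Complex.exp (2 * π * I * qa * ρ) *
      (Gf ρ (t + β * qa) - 2 * Complex.exp (-π * (t + β * qa) ^ 2 + 2 * π * (-qa / 2 + I * ρ) * (t + β * qa))) := by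
    intro t
    have : (t : ℂ) + (β + 1 : ℝ) * qa = (t + β * qa) + qa := by push_cast; ring
    rw [this, Gf_add_qa _ _ (sinh_line_ne h1.ne hβ t)]
    congr 5; ring
  rw [Xf]
  simp_rw [hpt]
  rw [integral_const_mul, integral_sub (Gf_integrable ρ h1.ne hβ) (gi.const_mul 2),
    integral_const_mul, gv, Xf]
  have : (π : ℂ) * (-qa / 2 + I * ρ) ^ 2 = π * I / 4 + (-π * ρ ^ 2 - π * I * qa * ρ) := by
    linear_combination π / 4 * qa_mul + π * ρ ^ 2 * I_mul_I
  rw [this, Complex.exp_add (π * I / 4), qa]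

lemma Xf_sub (ρ : ℂ) {β : ℝ} (h0 : -1 < β) (h1 : β < 0) :
    Xf β ρ - Xf (β + 1) ρ = 2 * qa := by
  have hβ : |β| < 1 := abs_lt.mpr ⟨h0, by linarith⟩
  have hβ' : |β + 1| < 1 := abs_lt.mpr ⟨by linarith, by linarith⟩
  have h := Hf_shift ρ hβ hβ'
  rw [int_Hf ρ h1.ne hβ, int_Hf ρ (by linarith) hβ'] at h
  have h2 := Xf_add_one 0 h0 h1
  simp at h2
  linear_combination h - h2

/-- Mordell's identity. -/
lemma mordell (ρ : ℂ) {β : ℝ} (h0 : -1 < β) (h1 : β < 0) :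
    Xf β ρ * (1 - Complex.exp (2 * π * I * qa * ρ)) =
      2 * qa * (1 - Complex.exp (-π * ρ ^ 2 + π * I * qa * ρ)) := by
  have h2 := Xf_sub ρ h0 h1
  have h3 := Xf_add_one ρ h0 h1
  have h4 : Complex.exp (-π * ρ ^ 2 + π * I * qa * ρ) =
    Complex.exp (2 * π * I * qa * ρ) * Complex.exp (-π * ρ ^ 2 - π * I * qa * ρ) := by
    rw [← Complex.exp_add]; congr 1; ring
  rw [h4]
  linear_combination h2 + h3

lemma Xf_half_zero : Xf (-(1/2)) 0 = qa := by
  have h := Xf_sub 0 (β := -(1/2)) (by norm_num) (by norm_num)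
  have h2 : Xf (-(1/2) + 1) 0 = - Xf (-(1/2)) 0 := by
    rw [Xf, Xf, ← integral_neg, ← integral_neg_eq_self]
    congr 1; ext t
    have : ((-t : ℝ) : ℂ) + ((-(1/2) + 1 : ℝ) : ℂ) * qa = -((t : ℂ) + ((-(1/2) : ℝ) : ℂ) * qa) := by
      push_cast; ring
    rw [this]
    generalize (t : ℂ) + ((-(1/2) : ℝ) : ℂ) * qa = z
    simp [Gf, Complex.sinh_neg, div_neg]
  rw [h2] at h
  linear_combination h / 2

lemma sine_mordell (ρ : ℂ) :
    I * ∫ t : ℝ, Complex.sin (2 * π * t * ρ) * Complex.exp (-π * (t : ℂ) ^ 2) / Complex.sinh (π * qa * t) =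
      Xf (-(1/2)) ρ - qa := by
  have h := Hf_shift ρ (β := 0) (β' := -(1/2)) (by simp) (by rw [abs_lt]; norm_num)
  rw [int_Hf ρ (β := -(1/2)) (by norm_num) (by rw [abs_lt]; norm_num), Xf_half_zero] at h
  rw [← h]
  simp only [ofReal_zero, zero_mul, add_zero]
  have hint : Integrable (fun t : ℝ => Hf ρ t) := by
    obtain ⟨C, hC⟩ := Hf_bound ρ 0 (by positivity)
    refine ((integrable_exp_neg_abs one_pos).const_mul C).mono' ?_ ?_
    · apply Continuous.aestronglyMeasurable
      refine (Hf_diff ρ).continuousOn.comp_continuous (by fun_prop) ?_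
      intro x; simp
    · refine Filter.Eventually.of_forall fun t => ?_
      simpa using hC t (by simp)
  have h2 : ∫ t : ℝ, Hf ρ t = ∫ t : ℝ, (Hf ρ t + Hf ρ (-t : ℝ)) / 2 := by
    rw [integral_div, integral_add hint hint.comp_neg, integral_neg_eq_self (fun t : ℝ => Hf ρ t)]
    ring
  rw [h2, ← integral_const_mul]
  apply integral_congr_ae
  have : ∀ᵐ t : ℝ, t ≠ 0 := by simp [ae_iff]
  filter_upwards [this] with t ht
  have ht' : (t : ℂ) ≠ 0 := by exact_mod_cast ht
  have ht'' : ((-t : ℝ) : ℂ) ≠ 0 := by simpa using ht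
  rw [Hf_eq ht', Hf_eq ht'', Gf, Gf, Gf, Gf]
  have s1 : 2 * Complex.sin (2 * π * t * ρ) = (Complex.exp (-(2 * π * I * t * ρ)) - Complex.exp (2 * π * I * t * ρ)) * I := by
    rw [Complex.sin]
    have : 2 * π * t * ρ * I = 2 * π * I * t * ρ := by ring
    rw [this, neg_mul, this]
    ring
  have s2 : Complex.sin (2 * π * t * ρ) = (Complex.exp (-(2 * π * I * t * ρ)) - Complex.exp (2 * π * I * t * ρ)) * I / 2 := by
    rw [← s1]; ring
  rw [s2]
  simp [Complex.sinh_neg, div_neg]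
  ring_nf
  simp [I_sq]
  ring

noncomputable def qb : ℂ := Complex.exp (-((π : ℂ) * I / 4))
lemma qa_mul_qb : qa * qb = 1 := by rw [qa, qb, ← Complex.exp_add]; simp
lemma qb_eq : qb = -I * qa := by
  have h := qa_mul_qb
  have : qa * (qb - (-I * qa)) = 0 := by
    linear_combination h + I * qa_mul + I_mul_I
  rcases mul_eq_zero.mp this with h | h
  · exact absurd h qa_ne
  · exact sub_eq_zero.mp h
lemma qb_re : qb.re = Real.sqrt 2 / 2 := by rw [qb_eq]; simp [qa_im]
lemma qb_im : qb.im = -(Real.sqrt 2 / 2) := by rw [qb_eq]; simp [qa_re]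
lemma qb_conj : (starRingEnd ℂ) qa = qb := by
  apply Complex.ext <;> simp [qa_re, qa_im, qb_re, qb_im]
lemma qb_ne : qb ≠ 0 := Complex.exp_ne_zero _

noncomputable def phi (x : ℝ) : ℂ :=
  (Complex.exp (-π * qa * x) - Complex.exp (-π * (x : ℂ) ^ 2)) / (2 * Complex.sinh (π * qa * x))

lemma norm_exp_sub_one_le' {w : ℂ} (h : w.re ≤ 0) : ‖Complex.exp w - 1‖ ≤ 2 * ‖w‖ := by
  by_cases hw : ‖w‖ ≤ 1
  · exact Complex.norm_exp_sub_one_le hw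
  · push Not at hw
    have h1 : ‖Complex.exp w‖ ≤ 1 := by rw [Complex.norm_exp]; exact Real.exp_le_one_iff.mpr h
    have := norm_sub_le (Complex.exp w) 1
    simp at this
    linarith

lemma sinh_qa_lower {x : ℝ} (hx : 0 < x) : 2 * x ≤ ‖Complex.sinh (π * qa * x)‖ := by
  refine le_trans ?_ (norm_sinh_ge_abs _)
  rw [qa_mul_re]
  simp only [ofReal_re, ofReal_im, sub_zero]
  rw [abs_of_pos (by positivity)]
  have := sqrt2_bounds.1
  have := Real.pi_gt_three
  have h2 : 2 ≤ π * (Real.sqrt 2 / 2) := by nlinarith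
  nlinarith

lemma sinh_qa_real_ne {x : ℝ} (hx : 0 < x) : Complex.sinh (π * qa * x) ≠ 0 := by
  have := sinh_qa_lower hx
  intro h; rw [h] at this; simp at this; linarith

lemma phi_bound {x : ℝ} (hx : 0 < x) : ‖phi x‖ ≤ 16 * Real.exp (-x) := by
  have hs := sinh_qa_lower hx
  have hpi3 := Real.pi_gt_three
  have hpi4 := Real.pi_lt_four
  have hr1 : (-π * qa * x : ℂ).re = -(π * (Real.sqrt 2 / 2) * x) := by
    simp [qa_re, qa_im]
  have hr2 : (-π * (x : ℂ) ^ 2).re = -π * x ^ 2 := by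
    simp [sq]
  have h2 : 2 ≤ π * (Real.sqrt 2 / 2) := by nlinarith [sqrt2_bounds.1]
  rw [phi, norm_div, norm_mul, Complex.norm_ofNat]
  rcases le_or_gt x 1 with h1 | h1
  · have he : Real.exp (-1) ≤ Real.exp (-x) := Real.exp_le_exp.mpr (by linarith)
    have he1 : 1 / 4 ≤ Real.exp (-1) := by
      rw [Real.exp_neg, ← one_div]
      apply one_div_le_one_div_of_le (Real.exp_pos 1)
      have := Real.exp_one_lt_d9
      linarith
    have n1 : ‖Complex.exp (-π * qa * x) - 1‖ ≤ 2 * (π * x) := by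
      refine (norm_exp_sub_one_le' ?_).trans (le_of_eq ?_)
      · rw [hr1]; nlinarith
      · simp [qa_norm, abs_of_pos Real.pi_pos, abs_of_pos hx]
    have n2 : ‖Complex.exp (-π * (x:ℂ) ^ 2) - 1‖ ≤ 2 * (π * x ^ 2) := by
      refine (norm_exp_sub_one_le' ?_).trans (le_of_eq ?_)
      · rw [hr2]; nlinarith [sq_nonneg x]
      · simp [abs_of_pos Real.pi_pos]
    have n3 : ‖Complex.exp (-π * qa * x) - Complex.exp (-π * (x:ℂ) ^ 2)‖ ≤ 16 * x := by
      have : Complex.exp (-π * qa * x) - Complex.exp (-π * (x:ℂ) ^ 2) =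
        (Complex.exp (-π * qa * x) - 1) - (Complex.exp (-π * (x:ℂ) ^ 2) - 1) := by ring
      rw [this]
      refine (norm_sub_le _ _).trans ?_
      nlinarith
    rw [div_le_iff₀ (by linarith)]
    have : 4 ≤ 16 * Real.exp (-x) := by linarith
    nlinarith
  · have n1 : ‖Complex.exp (-π * qa * x)‖ ≤ Real.exp (-x) := by
      rw [Complex.norm_exp, hr1]; apply Real.exp_le_exp.mpr; nlinarith
    have n2 : ‖Complex.exp (-π * (x:ℂ) ^ 2)‖ ≤ Real.exp (-x) := by
      rw [Complex.norm_exp, hr2]; apply Real.exp_le_exp.mpr; nlinarith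
    have n3 := norm_sub_le (Complex.exp (-π * qa * x)) (Complex.exp (-π * (x:ℂ) ^ 2))
    rw [div_le_iff₀ (by linarith)]
    have := Real.exp_pos (-x)
    nlinarith

lemma phi_contOn : ContinuousOn phi (Ioi 0) := by
  unfold phi
  refine ContinuousOn.div (by fun_prop) (by fun_prop) ?_
  intro x hx
  exact mul_ne_zero two_ne_zero (sinh_qa_real_ne hx)

lemma integrableOn_exp_neg : IntegrableOn (fun x : ℝ => Real.exp (-x)) (Ioi 0) := by
  simpa using integrableOn_exp_mul_Ioi (a := -1) (by norm_num) 0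

lemma phi_int : IntegrableOn phi (Ioi 0) := by
  refine (integrableOn_exp_neg.const_mul 16).mono' ?_ ?_
  · exact phi_contOn.aestronglyMeasurable measurableSet_Ioi
  · exact (ae_restrict_mem measurableSet_Ioi).mono (fun x hx => phi_bound hx)

lemma phi_sin_int (ρ : ℝ) : IntegrableOn (fun x : ℝ => phi x * Complex.sin (2 * π * x * ρ)) (Ioi 0) := by
  refine phi_int.mul_bdd (c := 1) ?_ ?_
  · exact Continuous.aestronglyMeasurable (by fun_prop)
  · refine Filter.Eventually.of_forall fun x => ?_
    have : Complex.sin (2 * π * x * ρ) = ((Real.sin (2 * π * x * ρ) : ℝ) : ℂ) := by push_cast; rfl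
    rw [this, Complex.norm_real]
    exact Real.abs_sin_le_one _

lemma norm_sin_real (c x : ℝ) (hc : 0 < c) (hx : 0 < x) :
    ‖Complex.sin (2 * π * x * c)‖ ≤ 2 * π * x * c := by
  have : Complex.sin (2 * π * x * c) = ((Real.sin (2 * π * x * c) : ℝ) : ℂ) := by push_cast; rfl
  rw [this, Complex.norm_real, Real.norm_eq_abs]
  refine Real.abs_sin_le_abs.trans ?_
  rw [abs_of_pos (by positivity)]

noncomputable def p2 (x : ℝ) : ℂ := Complex.exp (-π * (x : ℂ) ^ 2) / (2 * Complex.sinh (π * qa * x))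

lemma p2_sin_int {ρ : ℝ} (hρ : 0 < ρ) :
    IntegrableOn (fun x : ℝ => p2 x * Complex.sin (2 * π * x * ρ)) (Ioi 0) := by
  have hg : IntegrableOn (fun x : ℝ => (π * ρ) * Real.exp (-π * x ^ 2)) (Ioi 0) :=
    ((integrable_exp_neg_mul_sq Real.pi_pos).const_mul _).integrableOn
  refine hg.mono' ?_ ?_
  · apply ContinuousOn.aestronglyMeasurable _ measurableSet_Ioi
    unfold p2
    refine ContinuousOn.mul (ContinuousOn.div (by fun_prop) (by fun_prop) ?_) (by fun_prop)
    intro x hx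
    exact mul_ne_zero two_ne_zero (sinh_qa_real_ne hx)
  · refine (ae_restrict_mem measurableSet_Ioi).mono (fun x hx => ?_)
    have hx : 0 < x := hx
    have hs := sinh_qa_lower hx
    have h1 := norm_sin_real ρ x hρ hx
    rw [p2, norm_mul, norm_div, norm_mul, Complex.norm_ofNat, Complex.norm_exp]
    have hr2 : (-π * (x : ℂ) ^ 2).re = -π * x ^ 2 := by simp [sq]
    rw [hr2, div_mul_eq_mul_div, div_le_iff₀ (by linarith)]
    have he := Real.exp_pos (-π * x ^ 2)
    have hp := Real.pi_pos
    have : ‖Complex.sin (2 * π * x * ρ)‖ ≤ (π * ρ) * (2 * ‖Complex.sinh (π * qa * x)‖) := by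
      refine h1.trans ?_
      have : 0 < π * ρ := by positivity
      nlinarith
    nlinarith

lemma exp_q_norm {ρ : ℝ} (hρ : 0 < ρ) : ‖Complex.exp (2 * π * I * qa * ρ)‖ < 1 := by
  rw [Complex.norm_exp, Real.exp_lt_one_iff]
  have : (2 * π * I * qa * ρ : ℂ).re = -(2 * π * (Real.sqrt 2 / 2) * ρ) := by
    simp [qa_im]
  rw [this]
  have : 0 < 2 * π * (Real.sqrt 2 / 2) * ρ := by positivity
  linarith

lemma exp_q_ne {ρ : ℝ} (hρ : 0 < ρ) : 1 - Complex.exp (2 * π * I * qa * ρ) ≠ 0 := by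
  intro h
  have h1 : Complex.exp (2 * π * I * qa * ρ) = 1 := by linear_combination -h
  have := exp_q_norm hρ
  rw [h1] at this; simp at this

lemma even_integral (f : ℝ → ℂ) (he : ∀ t, f (-t) = f t) (hi : IntegrableOn f (Ioi 0)) :
    ∫ t : ℝ, f t = 2 * ∫ t in Ioi (0:ℝ), f t := by
  have h1 : ∫ t in Iic (0:ℝ), f t = ∫ t in Ioi (0:ℝ), f t := by
    have := integral_comp_neg_Iic (0:ℝ) f
    simp only [he, neg_zero] at this
    exact this
  have h2 : IntegrableOn f (Iic 0) := by
    have h3 : IntegrableOn (fun x => f (-x)) (Iic 0) := by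
      rw [integrableOn_Iic_iff_integrableOn_Iio]
      apply IntegrableOn.comp_neg_Iio
      simpa using hi
    simpa only [he] using h3
  rw [← intervalIntegral.integral_Iic_add_Ioi h2 hi, h1]
  ring

lemma p2_sin {ρ : ℝ} (hρ : 0 < ρ) :
    2 * ∫ x in Ioi (0:ℝ), p2 x * Complex.sin (2 * π * x * ρ) =
    -I / 2 * (Xf (-(1/2)) ρ - qa) := by
  have h := sine_mordell ρ
  have h2 : ∫ t : ℝ, Complex.sin (2 * π * t * ρ) * Complex.exp (-π * (t : ℂ) ^ 2) / Complex.sinh (π * qa * t) =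
      2 * ∫ t in Ioi (0:ℝ), Complex.sin (2 * π * t * ρ) * Complex.exp (-π * (t : ℂ) ^ 2) / Complex.sinh (π * qa * t) := by
    apply even_integral
    · intro t
      simp [Complex.sinh_neg, Complex.sin_neg]
    · have := (p2_sin_int hρ).const_mul 2
      refine this.congr (Filter.Eventually.of_forall fun x => ?_)
      simp only [p2]
      ring
  rw [h2] at h
  rw [← h]
  have h4 : ∫ x in Ioi (0:ℝ), p2 x * Complex.sin (2 * π * x * ρ) =
     (1 / 2) * ∫ x in Ioi (0:ℝ), Complex.sin (2 * π * x * ρ) * Complex.exp (-π * (x : ℂ) ^ 2) / Complex.sinh (π * qa * x) := by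
    rw [← integral_const_mul]
    congr 1; ext x
    rw [p2]
    ring
  rw [h4]
  generalize (∫ x in Ioi (0:ℝ), Complex.sin (2 * π * x * ρ) * Complex.exp (-π * (x : ℂ) ^ 2) / Complex.sinh (π * qa * x)) = J
  linear_combination J * I_mul_I

noncomputable def p1 (x : ℝ) : ℂ := (Complex.exp (2 * π * qa * x) - 1)⁻¹

lemma sub_coth_aux {w : ℂ} (h : Complex.sinh w ≠ 0) :
    Complex.exp (-w) / (2 * Complex.sinh w) = (Complex.exp (2 * w) - 1)⁻¹ := by
  have h1 : Complex.exp (2 * w) - 1 = 2 * Complex.sinh w * Complex.exp w := by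
    rw [Complex.sinh]
    have h2 : Complex.exp w * Complex.exp (-w) = 1 := by rw [← Complex.exp_add]; simp
    have h3 : Complex.exp (2 * w) = Complex.exp w * Complex.exp w := by
      rw [← Complex.exp_add]; congr 1; ring
    linear_combination h3 + h2
  rw [h1, Complex.exp_neg, mul_inv]
  field_simp

lemma phi_eq {x : ℝ} (hx : 0 < x) : phi x = p1 x - p2 x := by
  have h := sub_coth_aux (sinh_qa_real_ne hx)
  rw [phi, p1, p2, sub_div]
  have e1 : -π * qa * x = -(π * qa * x) := by ring
  have e2 : 2 * π * qa * x = 2 * (π * qa * x) := by ring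
  rw [e1, e2, h]

lemma int_exp_sin {b : ℂ} (hb : 0 < b.re) (c : ℝ) :
    ∫ x in Ioi (0:ℝ), Complex.exp (-b * x) * Complex.sin (c * x) = c / (b ^ 2 + c ^ 2) := by
  have h1 : (-b - c * I).re < 0 := by simp [hb]
  have h2 : (-b + c * I).re < 0 := by simp [hb]
  have e : ∀ x : ℝ, Complex.exp (-b * x) * Complex.sin (c * x) =
     I / 2 * (Complex.exp ((-b - c * I) * x) - Complex.exp ((-b + c * I) * x)) := by
    intro x
    rw [Complex.sin]
    rw [show (-b - c * I) * x = -b * x + -(c * x) * I by ring, show (-b + c * I) * x = -b * x + (c * x) * I by ring,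
      Complex.exp_add, Complex.exp_add]
    ring
  simp_rw [e]
  rw [integral_const_mul, integral_sub (integrableOn_exp_mul_complex_Ioi h1 0) (integrableOn_exp_mul_complex_Ioi h2 0),
    integral_exp_mul_complex_Ioi h1, integral_exp_mul_complex_Ioi h2]
  simp only [ofReal_zero, mul_zero, Complex.exp_zero]
  have n1 : -b - c * I ≠ 0 := by intro h; rw [h] at h1; simp at h1
  have n2 : -b + c * I ≠ 0 := by intro h; rw [h] at h2; simp at h2
  have n3 : b ^ 2 + (c:ℂ) ^ 2 ≠ 0 := by
    have : b ^ 2 + (c:ℂ) ^ 2 = (-b - c * I) * (-b + c * I) := by ring_nf; rw [I_sq]; ring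
    rw [this]; exact mul_ne_zero n1 n2
  rw [div_sub_div _ _ n1 n2, ← mul_div_assoc, div_eq_div_iff (mul_ne_zero n1 n2) n3]
  ring_nf
  simp only [I_sq]
  ring_nf
  try simp only [I_sq]
  try ring

lemma qa_re_ge : 4 ≤ 2 * π * qa.re := by
  rw [qa_re]
  nlinarith [sqrt2_bounds.1, Real.pi_gt_three]

noncomputable def Fs (ρ : ℝ) (n : ℕ) (x : ℝ) : ℂ :=
  Complex.exp (-(2 * π * (n + 1) * qa) * x) * Complex.sin ((2 * π * ρ : ℝ) * x)

lemma Fs_norm {ρ : ℝ} (hρ : 0 < ρ) (n : ℕ) {x : ℝ} (hx : 0 < x) :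
    ‖Fs ρ n x‖ ≤ π * ρ / (n + 1) * Real.exp (-(2 * (n + 1)) * x) := by
  have h1 := norm_sin_real ρ x hρ hx
  have e0 : (2 * π * x * ρ : ℂ) = (2 * π * ρ : ℝ) * x := by push_cast; ring
  rw [e0] at h1
  rw [Fs, norm_mul, Complex.norm_exp]
  have hn : (0:ℝ) < n + 1 := by positivity
  have e : (-(2 * π * (n + 1) * qa) * x : ℂ).re = -((2 * π * qa.re) * ((n + 1) * x)) := by
    have : (-(2 * π * (n + 1) * qa) * x : ℂ) = ((-(2 * π * (n + 1) * x) : ℝ) : ℂ) * qa := by push_cast; ring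
    rw [this, Complex.re_ofReal_mul]; ring
  have h2 : Real.exp (-(2 * π * (n + 1) * qa) * x : ℂ).re ≤ Real.exp (-(2 * (n + 1)) * x) * Real.exp (-(2 * (n + 1)) * x) := by
    rw [← Real.exp_add, e]
    apply Real.exp_le_exp.mpr
    have := qa_re_ge
    have h3 : 0 < ((n:ℝ) + 1) * x := by positivity
    nlinarith
  have h4 : x * Real.exp (-(2 * (n + 1)) * x) ≤ 1 / (2 * (n + 1)) := by
    rw [le_div_iff₀ (by positivity)]
    have := Real.add_one_le_exp ((2 * ((n:ℝ) + 1)) * x)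
    have h5 : Real.exp (-(2 * ((n:ℝ) + 1)) * x) * Real.exp ((2 * ((n:ℝ) + 1)) * x) = 1 := by
      rw [← Real.exp_add]; simp
    have := Real.exp_pos (-(2 * ((n:ℝ) + 1)) * x)
    nlinarith
  calc _ ≤ (Real.exp (-(2 * (n + 1)) * x) * Real.exp (-(2 * (n + 1)) * x)) * (2 * π * x * ρ) := by
        gcongr
    _ = (2 * π * ρ) * Real.exp (-(2 * (n + 1)) * x) * (x * Real.exp (-(2 * (n + 1)) * x)) := by ring
    _ ≤ (2 * π * ρ) * Real.exp (-(2 * (n + 1)) * x) * (1 / (2 * (n + 1))) := by gcongr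
    _ = _ := by field_simp

lemma Fs_int {ρ : ℝ} (hρ : 0 < ρ) (n : ℕ) : IntegrableOn (Fs ρ n) (Ioi 0) := by
  have ha : -(2 * ((n:ℝ) + 1)) < 0 := by
    have : (0:ℝ) < n + 1 := by positivity
    linarith
  have h := (integrableOn_exp_mul_Ioi ha 0).const_mul (π * ρ / (n + 1))
  refine h.mono' (Continuous.aestronglyMeasurable (by unfold Fs; fun_prop)) ?_
  exact (ae_restrict_mem measurableSet_Ioi).mono (fun x hx => Fs_norm hρ n hx)

lemma Fs_sum_norm {ρ : ℝ} (hρ : 0 < ρ) : Summable fun n : ℕ => ∫ x in Ioi (0:ℝ), ‖Fs ρ n x‖ := by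
  have hs : Summable fun n : ℕ => (π * ρ / 2) * (1 / ((n:ℝ) + 1) ^ 2) := by
    apply Summable.mul_left
    have := (summable_nat_add_iff 1).mpr (Real.summable_one_div_nat_pow.mpr (show 1 < 2 by norm_num))
    simpa using this
  refine Summable.of_nonneg_of_le (fun n => integral_nonneg fun x => norm_nonneg _) (fun n => ?_) hs
  have hn : (0:ℝ) < n + 1 := by positivity
  have ha : -(2 * ((n:ℝ) + 1)) < 0 := by linarith
  have h := (integrableOn_exp_mul_Ioi ha 0).const_mul (π * ρ / (n + 1))
  calc _ ≤ ∫ x in Ioi (0:ℝ), π * ρ / (n + 1) * Real.exp (-(2 * (n + 1)) * x) :=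
        setIntegral_mono_on (Fs_int hρ n).norm h measurableSet_Ioi (fun x hx => Fs_norm hρ n hx)
    _ = _ := by
      rw [integral_const_mul, integral_exp_mul_Ioi ha]
      simp
      field_simp

lemma p1_series {x : ℝ} (hx : 0 < x) (ρ : ℝ) : ∑' n : ℕ, Fs ρ n x = p1 x * Complex.sin (2 * π * x * ρ) := by
  have e0 : (2 * π * x * ρ : ℂ) = (2 * π * ρ : ℝ) * x := by push_cast; ring
  rw [e0]
  unfold Fs
  rw [tsum_mul_right]
  congr 1
  have hr : ‖Complex.exp (-(2 * π * qa * x))‖ < 1 := by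
    rw [Complex.norm_exp, Real.exp_lt_one_iff]
    have : (-(2 * π * qa * x) : ℂ) = ((-(2 * π * x) : ℝ) : ℂ) * qa := by push_cast; ring
    rw [this, Complex.re_ofReal_mul]
    have := qa_re_ge
    nlinarith
  have : ∀ n : ℕ, Complex.exp (-(2 * π * (n + 1) * qa) * x) = Complex.exp (-(2 * π * qa * x)) * Complex.exp (-(2 * π * qa * x)) ^ n := by
    intro n
    rw [← Complex.exp_nat_mul, ← Complex.exp_add]
    congr 1; ring
  simp_rw [this]
  rw [tsum_mul_left, tsum_geometric_of_norm_lt_one hr, p1, Complex.exp_neg]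
  have hne := Complex.exp_ne_zero (2 * π * qa * x)
  rw [← mul_inv, mul_sub, mul_inv_cancel₀ hne, mul_one]

lemma p1_sin {ρ : ℝ} (hρ : 0 < ρ) :
    2 * ∫ x in Ioi (0:ℝ), p1 x * Complex.sin (2 * π * x * ρ) =
    qa / 2 * Complex.cot (π * (ρ * qa)) - 1 / (2 * π * ρ) := by
  have h := (hasSum_integral_of_summable_integral_norm (fun n => Fs_int hρ n) (Fs_sum_norm hρ)).tsum_eq
  have e : ∫ x in Ioi (0:ℝ), (∑' n : ℕ, Fs ρ n x) = ∫ x in Ioi (0:ℝ), p1 x * Complex.sin (2 * π * x * ρ) :=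
    setIntegral_congr_fun measurableSet_Ioi (fun x hx => p1_series hx ρ)
  have hpi : (π : ℂ) ≠ 0 := by exact_mod_cast Real.pi_ne_zero
  have hρ' : (ρ : ℂ) ≠ 0 := by exact_mod_cast hρ.ne'
  have hqa := qa_ne
  have him : (ρ * qa : ℂ).im ≠ 0 := by
    rw [Complex.im_ofReal_mul, qa_im]; positivity
  have hx0 : (ρ * qa : ℂ) ∈ Complex.integerComplement := by
    rintro ⟨m, hm⟩
    rw [← hm] at him; simp at him
  have e2 : ∀ n : ℕ, ∫ x in Ioi (0:ℝ), Fs ρ n x = qa / (4 * π) * (1 / (ρ * qa - (n + 1)) + 1 / (ρ * qa + (n + 1))) := by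
    intro n
    unfold Fs
    have hb : 0 < (2 * π * (n + 1) * qa : ℂ).re := by
      have : (2 * π * (n + 1) * qa : ℂ) = ((2 * π * (n + 1) : ℝ) : ℂ) * qa := by push_cast; ring
      rw [this, Complex.re_ofReal_mul, qa_re]
      positivity
    rw [int_exp_sin hb]
    have n1 : (ρ * qa - (n + 1) : ℂ) ≠ 0 := by
      intro h
      apply him
      have : (ρ * qa : ℂ) = ((n + 1 : ℝ) : ℂ) := by push_cast; linear_combination h
      rw [this, ofReal_im]
    have n2 : (ρ * qa + (n + 1) : ℂ) ≠ 0 := by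
      intro h
      apply him
      have : (ρ * qa : ℂ) = ((-(n + 1) : ℝ) : ℂ) := by push_cast; linear_combination h
      rw [this, ofReal_im]
    have hd : (2 * π * (n + 1) * qa : ℂ) ^ 2 + ((2 * π * ρ : ℝ) : ℂ) ^ 2 = -(4 * π ^ 2) * I * ((ρ * qa - (n + 1)) * (ρ * qa + (n + 1))) := by
      push_cast
      linear_combination (4 * π ^ 2 * (n + 1) ^ 2 + 4 * π ^ 2 * I * ρ ^ 2) * qa_sq + 4 * π ^ 2 * ρ ^ 2 * I_mul_I
    rw [hd, div_add_div _ _ n1 n2, div_mul_div_comm, div_eq_div_iff]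
    · push_cast
      linear_combination (-(8 * π ^ 2 * ρ * (ρ * qa - (n + 1)) * (ρ * qa + (n + 1))) : ℂ) * (-I * qa_sq - I_mul_I)
    · exact mul_ne_zero (mul_ne_zero (neg_ne_zero.mpr (mul_ne_zero (by norm_num) (pow_ne_zero _ hpi))) I_ne_zero) (mul_ne_zero n1 n2)
    · exact mul_ne_zero (mul_ne_zero (by norm_num) hpi) (mul_ne_zero n1 n2)
  simp_rw [e2] at h
  rw [tsum_mul_left, ← cot_series_rep' hx0, e] at h
  rw [← h]
  field_simp
  ring

lemma p1_sin_int {ρ : ℝ} (hρ : 0 < ρ) :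
    IntegrableOn (fun x : ℝ => p1 x * Complex.sin (2 * π * x * ρ)) (Ioi 0) := by
  refine ((phi_sin_int ρ).add (p2_sin_int hρ)).congr ?_
  refine (ae_restrict_mem measurableSet_Ioi).mono (fun x hx => ?_)
  simp only [Pi.add_apply, phi_eq hx]
  ring

noncomputable def phih (ρ : ℝ) : ℂ := 2 * ∫ x in Ioi (0:ℝ), phi x * Complex.sin (2 * π * x * ρ)

lemma phih_eq {ρ : ℝ} (hρ : 0 < ρ) :
    phih ρ = qb * (Complex.exp (-π * (ρ : ℂ) ^ 2) / (2 * Complex.sinh (π * qb * ρ))) - 1 / (2 * π * ρ) := by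
  have e : ∫ x in Ioi (0:ℝ), phi x * Complex.sin (2 * π * x * ρ) =
    (∫ x in Ioi (0:ℝ), p1 x * Complex.sin (2 * π * x * ρ)) - ∫ x in Ioi (0:ℝ), p2 x * Complex.sin (2 * π * x * ρ) := by
    rw [← integral_sub (p1_sin_int hρ) (p2_sin_int hρ)]
    refine setIntegral_congr_fun measurableSet_Ioi (fun x hx => ?_)
    simp only [phi_eq hx]; ring
  rw [phih, e, mul_sub, p1_sin hρ, p2_sin hρ]
  have hm := mordell (β := -(1/2)) (ρ : ℂ) (by norm_num) (by norm_num)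
  have hq := exp_q_ne hρ
  have hX : Xf (-(1/2)) ρ = 2*qa*(1-cexp (-π*ρ^2+π*I*qa*ρ)) / (1 - Complex.exp (2 * π * I * qa * ρ)) := by
    rw [eq_div_iff hq, hm]
  rw [hX]
  set E := Complex.exp (π * I * qa * ρ) with hE
  have hE0 : E ≠ 0 := Complex.exp_ne_zero _
  have hE2 : Complex.exp (2 * π * I * qa * ρ) = E ^ 2 := by
    rw [hE, ← Complex.exp_nat_mul]; congr 1; push_cast; ring
  rw [hE2] at hq ⊢
  rw [Complex.exp_add, ← hE]
  have hsinh : 2 * Complex.sinh (π * qb * ρ) = E⁻¹ - E := by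
    rw [Complex.sinh, hE, ← Complex.exp_neg, qb_eq]
    rw [show (π * (-I * qa) * ρ : ℂ) = -(π * I * qa * ρ) by ring, neg_neg]
    ring
  have hcot : Complex.cot (π * (ρ * qa)) = -I * (1 + E ^ 2) / (1 - E ^ 2) := by
    rw [Complex.cot_eq_exp_ratio]
    rw [show (2 * I * (π * (ρ * qa)) : ℂ) = 2 * π * I * qa * ρ by ring, hE2]
    rw [div_eq_div_iff (mul_ne_zero I_ne_zero hq) hq]
    linear_combination ((1+E^2)*(1-E^2)) * I_mul_I
  rw [hsinh, hcot, qb_eq]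
  have hs : E⁻¹ - E = (1 - E ^ 2) / E := by field_simp
  rw [hs]
  field_simp
  ring

lemma cpow_pos {x : ℝ} (hx : 0 < x) (b : ℂ) : (x : ℂ) ^ b = Complex.exp (Real.log x * b) := by
  rw [Complex.cpow_def_of_ne_zero (by exact_mod_cast hx.ne'), Complex.ofReal_log hx.le]

noncomputable def Theta (ψ : ℝ → ℂ) (t : ℝ) : ℂ :=
  ∫ x in Ioi (0:ℝ), x * ψ x * Complex.exp (-(π * x ^ 2 * t))

lemma gm_kernel {b : ℂ} (hb : 0 < b.re) {x : ℝ} (hx : 0 < x) :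
    ∫ t in Ioi (0:ℝ), (t : ℂ) ^ (b - 1) * Complex.exp (-(π * x ^ 2 * t)) =
      (π : ℂ) ^ (-b) * Complex.Gamma b * (x : ℂ) ^ (-(2 * b)) := by
  have hr : 0 < π * x ^ 2 := by positivity
  have h := Complex.integral_cpow_mul_exp_neg_mul_Ioi hb hr
  push_cast at h
  rw [h]
  have e : (1 / (π * x ^ 2) : ℂ) = ((1 / (π * x ^ 2) : ℝ) : ℂ) := by push_cast; rfl
  rw [e, cpow_pos (by positivity), cpow_pos Real.pi_pos, cpow_pos hx]
  rw [one_div, Real.log_inv, Real.log_mul Real.pi_ne_zero (by positivity), Real.log_pow]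
  push_cast
  rw [show (-(Real.log π + 2 * Real.log x) * b : ℂ) = Real.log π * -b + Real.log x * (-(2 * b)) by ring,
    Complex.exp_add]
  ring

lemma gm_kernel_int {b : ℂ} (hb : 0 < b.re) {x : ℝ} (hx : 0 < x) :
    IntegrableOn (fun t : ℝ => (t : ℂ) ^ (b - 1) * Complex.exp (-(π * x ^ 2 * t))) (Ioi 0) := by
  have hr : 0 < π * x ^ 2 := by positivity
  have h := integrableOn_rpow_mul_exp_neg_mul_rpow (p := 1) (s := b.re - 1) (by linarith) one_pos hr
  refine h.mono' ?_ ?_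
  · apply ContinuousOn.aestronglyMeasurable _ measurableSet_Ioi
    refine ContinuousOn.mul ?_ (by fun_prop)
    intro t ht
    exact (ContinuousAt.cpow (by fun_prop) continuousAt_const (Or.inl (by simpa using ht))).continuousWithinAt
  · refine (ae_restrict_mem measurableSet_Ioi).mono (fun t ht => ?_)
    rw [norm_mul, Complex.norm_cpow_eq_rpow_re_of_pos ht, Complex.norm_exp]
    have e : (-(π * x ^ 2 * t) : ℂ) = ((-(π * x ^ 2 * t) : ℝ) : ℂ) := by push_cast; rfl
    rw [e, ofReal_re, Real.rpow_one]
    simp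

lemma gm_kernel_norm {b : ℂ} (hb : 0 < b.re) {x : ℝ} (hx : 0 < x) :
    ∫ t in Ioi (0:ℝ), ‖(t : ℂ) ^ (b - 1) * Complex.exp (-(π * x ^ 2 * t))‖ =
      π ^ (-b.re) * Real.Gamma b.re * x ^ (-(2 * b.re)) := by
  have hr : 0 < π * x ^ 2 := by positivity
  have h := Real.integral_rpow_mul_exp_neg_mul_Ioi hb hr
  have e : ∫ t in Ioi (0:ℝ), ‖(t : ℂ) ^ (b - 1) * Complex.exp (-(π * x ^ 2 * t))‖ =
     ∫ t in Ioi (0:ℝ), t ^ (b.re - 1) * Real.exp (-(π * x ^ 2 * t)) := by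
    refine setIntegral_congr_fun measurableSet_Ioi (fun t ht => ?_)
    have e : (-(π * x ^ 2 * t) : ℂ) = ((-(π * x ^ 2 * t) : ℝ) : ℂ) := by push_cast; rfl
    simp only [norm_mul, Complex.norm_cpow_eq_rpow_re_of_pos ht, Complex.norm_exp]
    rw [e, ofReal_re]
    simp
  rw [e, h, one_div, Real.inv_rpow hr.le, ← Real.rpow_neg hr.le, Real.mul_rpow Real.pi_pos.le (by positivity),
    ← Real.rpow_natCast, ← Real.rpow_mul hx.le]
  push_cast
  rw [mul_neg]
  ring

lemma gauss_mellin {b : ℂ} (hb : 0 < b.re) {ψ : ℝ → ℂ} (hc : ContinuousOn ψ (Ioi 0))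
    (hi : IntegrableOn (fun x : ℝ => (x : ℂ) ^ (1 - 2 * b) * ψ x) (Ioi 0)) :
    mellin (Theta ψ) b = (π : ℂ) ^ (-b) * Complex.Gamma b * ∫ x in Ioi (0:ℝ), (x : ℂ) ^ (1 - 2 * b) * ψ x := by
  set F : ℝ → ℝ → ℂ := fun t x => (x * ψ x) * ((t : ℂ) ^ (b - 1) * Complex.exp (-(π * x ^ 2 * t))) with hF
  have e1 : mellin (Theta ψ) b = ∫ t in Ioi (0:ℝ), ∫ x in Ioi (0:ℝ), F t x := by
    rw [mellin]
    congr 1; ext t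
    rw [Theta, smul_eq_mul, ← integral_const_mul]
    congr 1; ext x
    simp only [hF]; ring
  have hpow : ∀ x : ℝ, 0 < x → (x : ℂ) * (x : ℂ) ^ (-(2 * b)) = (x : ℂ) ^ (1 - 2 * b) := by
    intro x hx
    have : (x : ℂ) ≠ 0 := by exact_mod_cast hx.ne'
    rw [sub_eq_add_neg, Complex.cpow_add _ _ this, Complex.cpow_one]
  have e2 : ∀ x ∈ Ioi (0:ℝ), ∫ t in Ioi (0:ℝ), F t x =
      ((π : ℂ) ^ (-b) * Complex.Gamma b) * ((x : ℂ) ^ (1 - 2 * b) * ψ x) := by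
    intro x hx
    simp only [hF]
    rw [integral_const_mul, gm_kernel hb hx, ← hpow x hx]
    ring
  have hm : AEStronglyMeasurable (Function.uncurry F) ((volume.restrict (Ioi (0:ℝ))).prod (volume.restrict (Ioi (0:ℝ)))) := by
    rw [Measure.prod_restrict]
    apply ContinuousOn.aestronglyMeasurable _ (measurableSet_Ioi.prod measurableSet_Ioi)
    rw [hF]
    simp only [Function.uncurry_def]
    refine ContinuousOn.mul (ContinuousOn.mul (by fun_prop) ?_) (ContinuousOn.mul ?_ (by fun_prop))
    · exact hc.comp continuousOn_snd (fun p hp => hp.2)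
    · intro p hp
      refine (ContinuousAt.cpow (by fun_prop) continuousAt_const (Or.inl ?_)).continuousWithinAt
      simpa using hp.1
  have hint : Integrable (Function.uncurry F) ((volume.restrict (Ioi (0:ℝ))).prod (volume.restrict (Ioi (0:ℝ)))) := by
    rw [integrable_prod_iff' hm]
    constructor
    · refine (ae_restrict_mem measurableSet_Ioi).mono (fun x hx => ?_)
      exact (gm_kernel_int hb hx).const_mul (x * ψ x : ℂ)
    · refine (hi.norm.const_mul (π ^ (-b.re) * Real.Gamma b.re)).congr ?_
      refine (ae_restrict_mem measurableSet_Ioi).mono (fun x hx => ?_)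
      simp only [Function.uncurry_apply_pair, hF]
      simp_rw [norm_mul (x * ψ x : ℂ)]
      rw [integral_const_mul, gm_kernel_norm hb hx]
      rw [norm_mul, norm_mul, Complex.norm_cpow_eq_rpow_re_of_pos hx]
      have : (1 - 2 * b).re = 1 + -(2 * b.re) := by simp; ring
      rw [this, Real.rpow_add hx, Real.rpow_one, Complex.norm_real, Real.norm_of_nonneg (le_of_lt hx)]
      ring
  rw [e1, integral_integral_swap hint, setIntegral_congr_fun measurableSet_Ioi e2, integral_const_mul]

lemma gauss_y_int {t : ℝ} (ht : 0 < t) (x : ℝ) :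
    Integrable (fun y : ℝ => y * Complex.exp (-(π * t) * y ^ 2 + (2 * π * I * x) * y)) := by
  have h := (integrable_mul_exp_neg_mul_sq (b := π * t) (by positivity))
  refine h.mono (Continuous.aestronglyMeasurable (by fun_prop)) (Filter.Eventually.of_forall fun y => ?_)
  rw [norm_mul, norm_mul, Complex.norm_exp, Complex.norm_real]
  have : (-(π * t) * y ^ 2 + (2 * π * I * x) * y : ℂ) = ((-(π * t) * y ^ 2 : ℝ) : ℂ) + ((2 * π * x * y : ℝ) : ℂ) * I := by
    push_cast; ring
  rw [this]
  simp only [add_re, ofReal_re, mul_re, I_re, I_im, ofReal_im, mul_zero, zero_mul, sub_zero, add_zero]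
  rw [Real.norm_of_nonneg (Real.exp_pos _).le]

lemma gauss_J {t : ℝ} (ht : 0 < t) (x : ℝ) :
    ∫ y : ℝ, y * Complex.exp (-(π * t) * y ^ 2 + (2 * π * I * x) * y) =
      I * x / t * ((1 / t : ℂ) ^ (1 / 2 : ℂ) * Complex.exp (-(π * x ^ 2 / t))) := by
  have hpt : 0 < (π * t : ℂ).re := by
    have : (π * t : ℂ) = ((π * t : ℝ) : ℂ) := by push_cast; rfl
    rw [this, ofReal_re]; positivity
  have hpi : (π : ℂ) ≠ 0 := by exact_mod_cast Real.pi_ne_zero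
  have ht' : (t : ℂ) ≠ 0 := by exact_mod_cast ht.ne'
  have hi : Integrable (fun y : ℝ => Complex.exp (-(π * t) * y ^ 2 + (2 * π * I * x) * y)) := by
    simpa using integrable_cexp_quadratic hpt (2 * π * I * x) 0
  have h0 := integral_cexp_quadratic (b := -(π * t)) (by simpa using hpt) (2 * π * I * x) 0
  have hd : ∀ y : ℝ, HasDerivAt (fun y : ℝ => Complex.exp (-(π * t) * y ^ 2 + (2 * π * I * x) * y))
      (-(2 * π * t) * (y * Complex.exp (-(π * t) * y ^ 2 + (2 * π * I * x) * y)) +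
        (2 * π * I * x) * Complex.exp (-(π * t) * y ^ 2 + (2 * π * I * x) * y)) y := by
    intro y
    have h : HasDerivAt (fun z : ℂ => Complex.exp (-(π * t) * z ^ 2 + (2 * π * I * x) * z))
       (Complex.exp (-(π * t) * y ^ 2 + (2 * π * I * x) * y) * (-(π * t) * (2 * y) + 2 * π * I * x)) (y : ℂ) := by
      apply HasDerivAt.cexp
      apply HasDerivAt.add
      · simpa using ((hasDerivAt_id (y:ℂ)).pow 2).const_mul (-(π * t : ℂ))
      · simpa using (hasDerivAt_id (y:ℂ)).const_mul (2 * π * I * x : ℂ)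
    convert h.comp_ofReal using 1
    ring
  have h1 := integral_eq_zero_of_hasDerivAt_of_integrable hd
    (((gauss_y_int ht x).const_mul _).add (hi.const_mul _)) hi
  rw [integral_add ((gauss_y_int ht x).const_mul _) (hi.const_mul _), integral_const_mul, integral_const_mul] at h1
  simp only [add_zero] at h0
  rw [h0] at h1
  have e1 : (π / - -(π * t) : ℂ) = 1 / t := by field_simp
  have e2 : (0 - (2 * π * I * x) ^ 2 / (4 * -(π * t)) : ℂ) = -(π * x ^ 2 / t) := by
    field_simp
    ring_nf
    rw [I_sq]; ring
  rw [e1, e2] at h1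
  have h2π : (2 * π * t : ℂ) ≠ 0 := mul_ne_zero (mul_ne_zero two_ne_zero hpi) ht'
  apply mul_left_cancel₀ h2π
  have e3 : ∀ A : ℂ, (2 * π * t : ℂ) * (I * x / t * A) = 2 * π * I * x * A := by
    intro A; field_simp
  rw [e3]
  linear_combination -h1

lemma gauss_sin {t : ℝ} (ht : 0 < t) (x : ℝ) :
    2 * ∫ y in Ioi (0:ℝ), y * Complex.sin (2 * π * x * y) * Complex.exp (-(π * y ^ 2 * t)) =
      x / t * ((1 / t : ℂ) ^ (1 / 2 : ℂ) * Complex.exp (-(π * x ^ 2 / t))) := by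
  have e : ∀ y : ℝ, y * Complex.sin (2 * π * x * y) * Complex.exp (-(π * y ^ 2 * t)) =
    I / 2 * (y * Complex.exp (-(π * t) * y ^ 2 + (2 * π * I * (-x : ℝ)) * y) -
      y * Complex.exp (-(π * t) * y ^ 2 + (2 * π * I * x) * y)) := by
    intro y
    rw [Complex.sin, Complex.exp_add, Complex.exp_add]
    push_cast
    rw [show (2 * π * I * -x * y : ℂ) = -(2 * π * x * y) * I by ring, show (2 * π * I * x * y : ℂ) = (2 * π * x * y) * I by ring,
      show (-(π * y ^ 2 * t) : ℂ) = -(π * t) * y ^ 2 by ring]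
    ring
  have hint : Integrable (fun y : ℝ => y * Complex.sin (2 * π * x * y) * Complex.exp (-(π * y ^ 2 * t))) := by
    simp_rw [e]
    exact ((gauss_y_int ht (-x)).sub (gauss_y_int ht x)).const_mul _
  rw [← even_integral (fun y : ℝ => y * Complex.sin (2 * π * x * y) * Complex.exp (-(π * y ^ 2 * t))) _ hint.integrableOn]
  · simp_rw [e]
    rw [integral_const_mul, integral_sub (gauss_y_int ht (-x)) (gauss_y_int ht x), gauss_J ht, gauss_J ht]
    push_cast
    rw [neg_sq]
    generalize (1 / t : ℂ) ^ (1 / 2 : ℂ) * Complex.exp (-(π * x ^ 2 / t)) = A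
    linear_combination (-(x / t * A)) * I_mul_I
  · intro y
    simp [Complex.sin_neg]

lemma norm_phih_le {ρ : ℝ} : ‖phih ρ‖ ≤ 32 := by
  rw [phih, norm_mul, Complex.norm_ofNat]
  have h : ‖∫ x in Ioi (0:ℝ), phi x * Complex.sin (2 * π * x * ρ)‖ ≤ ∫ x in Ioi (0:ℝ), 16 * Real.exp (-x) := by
    refine norm_integral_le_of_norm_le (integrableOn_exp_neg.const_mul 16) ?_
    refine (ae_restrict_mem measurableSet_Ioi).mono (fun x hx => ?_)
    have : Complex.sin (2 * π * x * ρ) = ((Real.sin (2 * π * x * ρ) : ℝ) : ℂ) := by push_cast; rfl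
    rw [norm_mul, this, Complex.norm_real, Real.norm_eq_abs]
    have h1 := Real.abs_sin_le_one (2 * π * x * ρ)
    have h2 := phi_bound hx
    have := norm_nonneg (phi x)
    nlinarith
  rw [integral_const_mul, integral_exp_neg_Ioi_zero] at h
  linarith

lemma sinh_qb_eq (x : ℝ) : Complex.sinh (π * qb * x) = (starRingEnd ℂ) (Complex.sinh (π * qa * x)) := by
  rw [← Complex.sinh_conj]
  simp [qb_conj]

lemma sinh_qb_ne {x : ℝ} (hx : 0 < x) : Complex.sinh (π * qb * x) ≠ 0 := by
  rw [sinh_qb_eq]; simpa using sinh_qa_real_ne hx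

lemma norm_phih_le' {ρ : ℝ} (hρ : 0 < ρ) : ‖phih ρ‖ ≤ 1 / ρ := by
  rw [phih_eq hρ]
  have hs := sinh_qa_lower hρ
  have h1 : ‖Complex.sinh (π * qb * ρ)‖ = ‖Complex.sinh (π * qa * ρ)‖ := by
    rw [sinh_qb_eq, RCLike.norm_conj]
  have hq : ‖qb‖ = 1 := by rw [← qb_conj, RCLike.norm_conj, qa_norm]
  refine (norm_sub_le _ _).trans ?_
  rw [norm_mul, hq, norm_div, norm_mul, h1, Complex.norm_exp]
  have hr2 : (-π * (ρ : ℂ) ^ 2).re = -π * ρ ^ 2 := by simp [sq]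
  have he : Real.exp (-π * (ρ : ℂ) ^ 2).re ≤ 1 := by
    rw [hr2, Real.exp_le_one_iff]
    nlinarith [Real.pi_pos, sq_nonneg ρ]
  have e2 : ‖(1 / (2 * π * ρ) : ℂ)‖ = 1 / (2 * π * ρ) := by
    simp [abs_of_pos Real.pi_pos, abs_of_pos hρ]
  rw [e2]
  have h3 : Real.exp (-π * (ρ : ℂ) ^ 2).re / (‖(2:ℂ)‖ * ‖Complex.sinh (π * qa * ρ)‖) ≤ 1 / (4 * ρ) := by
    apply div_le_div₀ (by norm_num) he (by positivity)
    rw [Complex.norm_ofNat]; linarith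
  have h4 : 1 / (2 * π * ρ) ≤ 1 / (4 * ρ) := by
    apply one_div_le_one_div_of_le (by positivity)
    nlinarith [Real.pi_gt_three]
  have h5 : 1 / (4 * ρ) + 1 / (4 * ρ) ≤ 1 / ρ := by
    rw [← add_div, div_le_div_iff₀ (by positivity) hρ]; linarith
  linarith

lemma phih_contOn : ContinuousOn phih (Ioi 0) := by
  refine ContinuousOn.congr (f := fun ρ : ℝ => qb * (Complex.exp (-π * (ρ : ℂ) ^ 2) / (2 * Complex.sinh (π * qb * ρ))) - 1 / (2 * π * ρ)) ?_ (fun ρ hρ => phih_eq hρ)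
  refine ContinuousOn.sub (ContinuousOn.mul (by fun_prop) (ContinuousOn.div (by fun_prop) (by fun_prop) ?_))
    (ContinuousOn.div (by fun_prop) (by fun_prop) ?_)
  · intro x hx
    exact mul_ne_zero two_ne_zero (sinh_qb_ne hx)
  · intro x hx
    have : (x : ℂ) ≠ 0 := by exact_mod_cast (ne_of_gt hx)
    have hpi : (π : ℂ) ≠ 0 := by exact_mod_cast Real.pi_ne_zero
    exact mul_ne_zero (mul_ne_zero two_ne_zero hpi) this

/-- convergence of Mellin integrals for bounded functions decaying like 1/x -/
lemma cpow_int {f : ℝ → ℂ} (hc : ContinuousOn f (Ioi 0)) {C : ℝ} (h1 : ∀ x, 0 < x → ‖f x‖ ≤ C)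
    (h2 : ∀ x, 0 < x → ‖f x‖ ≤ C / x) {s : ℂ} (hs0 : 0 < s.re) (hs1 : s.re < 1) :
    IntegrableOn (fun x : ℝ => (x : ℂ) ^ (s - 1) * f x) (Ioi 0) := by
  have := mellinConvergent_of_isBigO_rpow (f := f) (s := s) (a := 1) (b := 0)
    (hc.locallyIntegrableOn measurableSet_Ioi) ?_ hs1 ?_ hs0
  · exact this
  · refine Asymptotics.IsBigO.of_bound C ?_
    filter_upwards [Filter.eventually_gt_atTop 0] with x hx
    rw [Real.rpow_neg_one, norm_inv, Real.norm_of_nonneg hx.le, ← div_eq_mul_inv]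
    exact h2 x hx
  · refine Asymptotics.IsBigO.of_bound C ?_
    filter_upwards [self_mem_nhdsWithin] with x hx
    simpa using h1 x hx

lemma phi_cpow_int {s : ℂ} (hs0 : 0 < s.re) (hs1 : s.re < 1) :
    IntegrableOn (fun x : ℝ => (x : ℂ) ^ (s - 1) * phi x) (Ioi 0) := by
  refine cpow_int phi_contOn (C := 16) (fun x hx => (phi_bound hx).trans ?_) (fun x hx => (phi_bound hx).trans ?_) hs0 hs1
  · have : Real.exp (-x) ≤ 1 := Real.exp_le_one_iff.mpr (by linarith)
    linarith
  · rw [show (16:ℝ) / x = 16 * (1 / x) by ring]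
    gcongr
    rw [Real.exp_neg, ← one_div]
    apply one_div_le_one_div_of_le hx
    have := Real.add_one_le_exp x
    linarith

lemma phih_cpow_int {s : ℂ} (hs0 : 0 < s.re) (hs1 : s.re < 1) :
    IntegrableOn (fun x : ℝ => (x : ℂ) ^ (s - 1) * phih x) (Ioi 0) := by
  refine cpow_int phih_contOn (C := 32) (fun x hx => norm_phih_le) (fun x hx => (norm_phih_le' hx).trans ?_) hs0 hs1
  gcongr
  norm_num

lemma theta_trans {t : ℝ} (ht : 0 < t) :
    Theta phih t = (t : ℂ) ^ (-(3 / 2) : ℂ) * Theta phi t⁻¹ := by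
  have ht' : (t : ℂ) ≠ 0 := by exact_mod_cast ht.ne'
  set F : ℝ → ℝ → ℂ := fun y x => 2 * (phi x * (y * Complex.sin (2 * π * x * y) * Complex.exp (-(π * y ^ 2 * t)))) with hF
  have e1 : Theta phih t = ∫ y in Ioi (0:ℝ), ∫ x in Ioi (0:ℝ), F y x := by
    rw [Theta]
    congr 1; ext y
    simp only [phih, hF]
    rw [integral_const_mul]
    have : ∀ x : ℝ, phi x * (y * Complex.sin (2 * π * x * y) * Complex.exp (-(π * y ^ 2 * t))) =
      (y * Complex.exp (-(π * y ^ 2 * t))) * (phi x * Complex.sin (2 * π * x * y)) := by intro x; ring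
    simp_rw [this]
    rw [integral_const_mul]
    ring
  have e2 : ∀ x : ℝ, ∫ y in Ioi (0:ℝ), F y x = phi x * (x / t * ((1 / t : ℂ) ^ (1 / 2 : ℂ) * Complex.exp (-(π * x ^ 2 / t)))) := by
    intro x
    rw [← gauss_sin ht]
    simp only [hF]
    rw [integral_const_mul, integral_const_mul]
    ring
  have hint : Integrable (Function.uncurry F) ((volume.restrict (Ioi (0:ℝ))).prod (volume.restrict (Ioi (0:ℝ)))) := by
    have hg : IntegrableOn (fun y : ℝ => (y : ℂ) * Complex.exp (-(π * t : ℂ) * y ^ 2)) (Ioi 0) := by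
      refine (integrable_mul_cexp_neg_mul_sq (b := (π * t : ℂ)) ?_).integrableOn
      have : (π * t : ℂ) = ((π * t : ℝ) : ℂ) := by push_cast; rfl
      rw [this, ofReal_re]; positivity
    have h1 := (Integrable.mul_prod hg phi_int).const_mul 2
    have h2 := h1.mul_bdd (c := 1) (g := fun p : ℝ × ℝ => Complex.sin (2 * π * p.2 * p.1))
      (Continuous.aestronglyMeasurable (by fun_prop)) (Filter.Eventually.of_forall fun p => by
        have : Complex.sin (2 * π * p.2 * p.1) = ((Real.sin (2 * π * p.2 * p.1) : ℝ) : ℂ) := by push_cast; rfl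
        rw [this, Complex.norm_real]
        exact Real.abs_sin_le_one _)
    refine h2.congr (Filter.Eventually.of_forall fun p => ?_)
    simp only [Function.uncurry, hF]
    rw [show (-(π * p.1 ^ 2 * t) : ℂ) = -(π * t) * p.1 ^ 2 by ring]
    ring
  rw [e1, integral_integral_swap hint]
  simp_rw [e2]
  rw [Theta, ← integral_const_mul]
  congr 1; ext x
  have e3 : (t : ℂ) ^ (-(3 / 2) : ℂ) = 1 / t * (1 / t : ℂ) ^ (1 / 2 : ℂ) := by
    have : (1 / t : ℂ) = ((t⁻¹ : ℝ) : ℂ) := by push_cast; simp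
    rw [this]
    rw [cpow_pos ht, cpow_pos (inv_pos.mpr ht), Real.log_inv]
    have h : ((t⁻¹ : ℝ) : ℂ) = Complex.exp (-(Real.log t)) := by
      rw [← Complex.ofReal_neg, ← Complex.ofReal_exp, Real.exp_neg, Real.exp_log ht]
    rw [h, ← Complex.exp_add]
    congr 1; push_cast; ring
  rw [e3]
  push_cast
  rw [show (π * x ^ 2 / t : ℂ) = π * x ^ 2 * (t : ℂ)⁻¹ by ring]
  ring

lemma func_eq {s : ℂ} (hs0 : 0 < s.re) (hs1 : s.re < 1) :
    (π : ℂ) ^ (-((2 - s) / 2)) * Complex.Gamma ((2 - s) / 2) * ∫ x in Ioi (0:ℝ), (x : ℂ) ^ (s - 1) * phi x =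
    (π : ℂ) ^ (-((1 + s) / 2)) * Complex.Gamma ((1 + s) / 2) * ∫ x in Ioi (0:ℝ), (x : ℂ) ^ (-s) * phih x := by
  have ea : 1 - 2 * ((2 - s) / 2) = s - 1 := by ring
  have eb : 1 - 2 * ((1 + s) / 2) = -s := by ring
  have ha : 0 < ((2 - s) / 2).re := by simp; linarith
  have hb : 0 < ((1 + s) / 2).re := by simp; linarith
  have hA := gauss_mellin ha phi_contOn (by rw [ea]; exact phi_cpow_int hs0 hs1)
  have hB := gauss_mellin hb phih_contOn (by
    rw [eb]
    have := phih_cpow_int (s := 1 - s) (by simp; linarith) (by simp; linarith)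
    simpa using this)
  rw [ea] at hA
  rw [eb] at hB
  rw [← hA, ← hB]
  have h1 : mellin (Theta phih) ((1 + s) / 2) = mellin (fun t : ℝ => (t : ℂ) ^ (-(3 / 2) : ℂ) • Theta phi t⁻¹) ((1 + s) / 2) := by
    rw [mellin, mellin]
    refine setIntegral_congr_fun measurableSet_Ioi (fun t ht => ?_)
    simp only [theta_trans ht, smul_eq_mul]
  rw [h1, mellin_cpow_smul (fun t : ℝ => Theta phi t⁻¹), mellin_comp_inv]
  congr 1; ring

lemma w_int (s : ℂ) (A : ℂ) :
    ∫ w in Set.Ioi (0 : ℝ), Complex.exp (-((w : ℂ) ^ 2 / 2) - (Real.sqrt (2 * π) : ℂ) * A * (w : ℂ)) * (w : ℂ) ^ (s - 1) =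
    ((2 * π : ℝ) : ℂ) ^ (s / 2) * ∫ x in Ioi (0:ℝ), (x : ℂ) ^ (s - 1) * Complex.exp (-(π * x ^ 2) - 2 * π * A * x) := by
  set b := Real.sqrt (2 * π) with hb
  have hb0 : 0 < b := Real.sqrt_pos.mpr (by positivity)
  have hb2 : b * b = 2 * π := Real.mul_self_sqrt (by positivity)
  have hb2' : (b : ℂ) * b = 2 * π := by exact_mod_cast hb2
  have h := integral_comp_mul_left_Ioi (fun w : ℝ => Complex.exp (-((w : ℂ) ^ 2 / 2) - (b : ℂ) * A * (w : ℂ)) * (w : ℂ) ^ (s - 1)) 0 hb0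
  rw [mul_zero] at h
  have h2 : ∫ w in Set.Ioi (0 : ℝ), Complex.exp (-((w : ℂ) ^ 2 / 2) - (b : ℂ) * A * (w : ℂ)) * (w : ℂ) ^ (s - 1) =
     b * ∫ x in Ioi (0:ℝ), Complex.exp (-(((b * x : ℝ) : ℂ) ^ 2 / 2) - (b : ℂ) * A * ((b * x : ℝ) : ℂ)) * ((b * x : ℝ) : ℂ) ^ (s - 1) := by
    rw [h, Complex.real_smul]
    push_cast
    rw [mul_inv_cancel_left₀ (by exact_mod_cast hb0.ne')]
  rw [h2, ← integral_const_mul, ← integral_const_mul]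
  refine setIntegral_congr_fun measurableSet_Ioi (fun x hx => ?_)
  have hx : 0 < x := hx
  have e1 : ((2 * π : ℝ) : ℂ) ^ (s / 2) = b * (b : ℂ) ^ (s - 1) := by
    have hb1 : (b : ℂ) = Complex.exp (Real.log b) := by rw [← Complex.ofReal_exp, Real.exp_log hb0]
    rw [cpow_pos (by positivity), cpow_pos hb0]
    nth_rewrite 1 [hb1]
    rw [← Complex.exp_add, hb, Real.log_sqrt (by positivity)]
    congr 1; push_cast; ring
  have e2 : ((b * x : ℝ) : ℂ) ^ (s - 1) = (b : ℂ) ^ (s - 1) * (x : ℂ) ^ (s - 1) := by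
    rw [Complex.ofReal_mul, Complex.mul_cpow_ofReal_nonneg hb0.le hx.le]
  rw [e1, e2]
  push_cast
  rw [show (-((b * x : ℂ) ^ 2 / 2) - b * A * (b * x)) = -(π * x ^ 2) - 2 * π * A * x by
    linear_combination (-(x ^ 2) / 2 - A * x) * hb2']
  ring

lemma theta_exp : Complex.exp (((-(π / 4) : ℝ) : ℂ) * I) = qb := by
  rw [qb]; congr 1; push_cast; ring

lemma qb_sq : qb ^ 2 = -I := by rw [qb_eq]; linear_combination I ^ 2 * qa_sq + I * I_mul_I

lemma u_factor (z : ℂ) :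
    Complex.exp (-((π : ℂ) * I * (1 / 2 + qb * z) ^ 2) + (π : ℂ) * I * (1 / 2 + qb * z)) /
          (2 * I * Complex.cos ((π : ℂ) * (1 / 2 + qb * z))) =
    qa * (Complex.exp (-π * z ^ 2) * (-(1 / 2)) * (Complex.sinh (π * qa * z))⁻¹) := by
  have e1 : -((π : ℂ) * I * (1 / 2 + qb * z) ^ 2) + (π : ℂ) * I * (1 / 2 + qb * z) = π * I / 4 + -π * z ^ 2 := by
    linear_combination (-π * I * z ^ 2) * qb_sq + π * z ^ 2 * I_mul_I
  have e2 : Complex.cos ((π : ℂ) * (1 / 2 + qb * z)) = I * Complex.sinh (π * qa * z) := by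
    rw [show (π : ℂ) * (1 / 2 + qb * z) = -(π * qa * z) * I + π / 2 by rw [qb_eq]; ring,
      Complex.cos_add_pi_div_two, Complex.sin_mul_I, Complex.sinh_neg]
    ring
  rw [e1, e2, Complex.exp_add, ← qa, show 2 * I * (I * Complex.sinh (π * qa * z)) = -2 * Complex.sinh (π * qa * z) by
    linear_combination 2 * Complex.sinh (π * qa * z) * I_mul_I]
  rw [div_eq_mul_inv, mul_inv]
  ring

noncomputable def GG (s : ℂ) (β : ℝ) (t x : ℝ) : ℂ :=
  (x : ℂ) ^ (s - 1) * Complex.exp (-(π * x ^ 2) - π * qa * x) * Gf (I * x) (t + β * qa)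

lemma GG_bound (s : ℂ) {β : ℝ} (hβ0 : β ≠ 0) (hβ : |β| < 1) : ∃ K : ℝ, 0 ≤ K ∧ ∀ t x : ℝ, 0 < x →
    ‖GG s β t x‖ ≤ K * ((x ^ (s.re - 1) * Real.exp (-x)) * Real.exp (-π * (t + (x + β * (Real.sqrt 2 / 2))) ^ 2)) := by
  obtain ⟨M, hM0, hM⟩ := inv_sinh_line_bound hβ0 hβ
  refine ⟨Real.exp π * M, by positivity, fun t x hx => ?_⟩
  rw [GG, Gf, norm_mul, norm_mul, Complex.norm_cpow_eq_rpow_re_of_pos hx, div_eq_mul_inv, norm_mul]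
  have h1 := hM t
  have h2 : ‖Complex.exp (-(π * x ^ 2) - π * qa * x)‖ * ‖Complex.exp (-π * (t + β * qa) ^ 2) * Complex.exp (2 * π * I * (t + β * qa) * (I * x))‖ ≤
      Real.exp π * (Real.exp (-x) * Real.exp (-π * (t + (x + β * (Real.sqrt 2 / 2))) ^ 2)) := by
    rw [← norm_mul, ← Complex.exp_add, ← Complex.exp_add, Complex.norm_exp, ← Real.exp_add, ← Real.exp_add]
    apply Real.exp_le_exp.mpr
    have e : -(π * x ^ 2) - π * qa * x + (-π * (t + β * qa) ^ 2 + 2 * π * I * (t + β * qa) * (I * x)) =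
       -π * (t + β * qa + x) ^ 2 - π * qa * x := by
      linear_combination (2 * π * (t + β * qa) * x) * I_mul_I
    rw [e, line_eq]
    have e2 : (-π * (((t + β * (Real.sqrt 2 / 2) : ℝ) : ℂ) + ((β * (Real.sqrt 2 / 2) : ℝ) : ℂ) * I + x) ^ 2 - π * qa * x).re =
      -π * ((t + (x + β * (Real.sqrt 2 / 2))) ^ 2 - (β * (Real.sqrt 2 / 2)) ^ 2) - π * (Real.sqrt 2 / 2) * x := by
      have : (-π * (((t + β * (Real.sqrt 2 / 2) : ℝ) : ℂ) + ((β * (Real.sqrt 2 / 2) : ℝ) : ℂ) * I + x) ^ 2 - π * qa * x) =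
        ((-π * ((t + (x + β * (Real.sqrt 2 / 2))) ^ 2 - (β * (Real.sqrt 2 / 2)) ^ 2) : ℝ) : ℂ) +
        ((-π * (2 * (t + (x + β * (Real.sqrt 2 / 2))) * (β * (Real.sqrt 2 / 2))) : ℝ) : ℂ) * I - ((π * x : ℝ) : ℂ) * qa := by
        push_cast
        linear_combination (-π * (β * (Real.sqrt 2 / 2)) ^ 2 : ℂ) * I_mul_I
      rw [this]
      simp only [sub_re, add_re, ofReal_re, re_ofReal_mul, I_re, qa_re]
      ring
    rw [e2]
    have hs2 : (Real.sqrt 2) ^ 2 = 2 := Real.sq_sqrt (by norm_num)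
    have hb2 : β ^ 2 ≤ 1 := by rw [← sq_abs]; nlinarith [abs_nonneg β]
    have h3 : (β * (Real.sqrt 2 / 2)) ^ 2 ≤ 1 := by
      rw [mul_pow, div_pow, hs2]; linarith
    have h4 : 2 ≤ π * (Real.sqrt 2 / 2) := by nlinarith [sqrt2_bounds.1, Real.pi_gt_three]
    nlinarith [Real.pi_pos]
  have e3 : (s - 1).re = s.re - 1 := by simp
  rw [e3]
  have h0 : 0 ≤ x ^ (s.re - 1) := Real.rpow_nonneg hx.le _
  calc _ = x ^ (s.re - 1) * (‖Complex.exp (-(π * x ^ 2) - π * qa * x)‖ * ‖Complex.exp (-π * (t + β * qa) ^ 2) * Complex.exp (2 * π * I * (t + β * qa) * (I * x))‖) *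
        ‖(Complex.sinh (π * qa * (t + β * qa)))⁻¹‖ := by ring
    _ ≤ x ^ (s.re - 1) * (Real.exp π * (Real.exp (-x) * Real.exp (-π * (t + (x + β * (Real.sqrt 2 / 2))) ^ 2))) * M := by
        gcongr
    _ = _ := by ring

lemma dom_int {σ : ℝ} (hσ : 0 < σ) (δ : ℝ) :
    Integrable (fun p : ℝ × ℝ => (p.2 ^ (σ - 1) * Real.exp (-p.2)) * Real.exp (-π * (p.1 + (p.2 + δ)) ^ 2))
      ((volume : Measure ℝ).prod (volume.restrict (Ioi (0:ℝ)))) := by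
  have hA : IntegrableOn (fun x : ℝ => x ^ (σ - 1) * Real.exp (-x)) (Ioi 0) := by
    have := Real.GammaIntegral_convergent hσ
    refine this.congr (Filter.Eventually.of_forall fun x => ?_)
    simp only; ring
  have hg := integrable_exp_neg_mul_sq Real.pi_pos
  rw [integrable_prod_iff']
  · constructor
    · refine Filter.Eventually.of_forall fun x => ?_
      exact (hg.comp_add_right (x + δ)).const_mul (x ^ (σ - 1) * Real.exp (-x))
    · have e : ∀ x : ℝ, ∫ t : ℝ, ‖(x ^ (σ - 1) * Real.exp (-x)) * Real.exp (-π * (t + (x + δ)) ^ 2)‖ =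
        ‖x ^ (σ - 1) * Real.exp (-x)‖ * ∫ t : ℝ, ‖Real.exp (-π * t ^ 2)‖ := by
        intro x
        simp_rw [norm_mul (x ^ (σ - 1) * Real.exp (-x))]
        rw [integral_const_mul, integral_add_right_eq_self (fun t : ℝ => ‖Real.exp (-π * t ^ 2)‖)]
      simp only [e]
      exact hA.norm.mul_const _
  · refine AEStronglyMeasurable.mul ?_ (Continuous.aestronglyMeasurable (by fun_prop))
    exact hA.aestronglyMeasurable.comp_snd

lemma GG_int {s : ℂ} (hs : 0 < s.re) {β : ℝ} (hβ0 : β ≠ 0) (hβ : |β| < 1) :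
    Integrable (Function.uncurry (GG s β)) ((volume : Measure ℝ).prod (volume.restrict (Ioi (0:ℝ)))) := by
  obtain ⟨K, hK0, hK⟩ := GG_bound s hβ0 hβ
  refine ((dom_int hs (β * (Real.sqrt 2 / 2))).const_mul K).mono' ?_ ?_
  · have h1 : AEStronglyMeasurable (fun x : ℝ => (x : ℂ) ^ (s - 1)) (volume.restrict (Ioi (0:ℝ))) := by
      apply ContinuousOn.aestronglyMeasurable _ measurableSet_Ioi
      intro t ht
      exact (ContinuousAt.cpow (by fun_prop) continuousAt_const (Or.inl (by simpa using ht))).continuousWithinAt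
    have h2 := (inv_sinh_line_cont hβ0 hβ)
    have h3 : AEStronglyMeasurable (fun p : ℝ × ℝ => (p.2 : ℂ) ^ (s - 1)) ((volume : Measure ℝ).prod (volume.restrict (Ioi (0:ℝ)))) :=
      h1.comp_snd
    simp only [Function.uncurry_def, GG, Gf, div_eq_mul_inv]
    refine AEStronglyMeasurable.mul (h3.mul (Continuous.aestronglyMeasurable (by fun_prop))) (Continuous.aestronglyMeasurable ?_)
    exact Continuous.mul (by fun_prop) (h2.comp continuous_fst)
  · have : ∀ᵐ p : ℝ × ℝ ∂((volume : Measure ℝ).prod (volume.restrict (Ioi (0:ℝ)))), p.2 ∈ Ioi (0:ℝ) := by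
      have h := (ae_restrict_mem (measurableSet_Ioi (a := (0:ℝ))) (μ := volume))
      exact Measure.quasiMeasurePreserving_snd.ae h
    refine this.mono (fun p hp => ?_)
    exact hK p.1 p.2 hp

lemma Xf_phi {β : ℝ} (h0 : -1 < β) (h1 : β < 0) {x : ℝ} (hx : 0 < x) :
    Complex.exp (-(π * x ^ 2) - π * qa * x) * Xf β (I * x) = -2 * qa * phi x := by
  have hm := mordell (β := β) (I * x : ℂ) h0 h1
  have hs := sinh_qa_real_ne hx
  rw [phi]
  have e1 : (2 * π * I * qa * (I * x) : ℂ) = -(π * qa * x) + -(π * qa * x) := by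
    linear_combination (2 * π * qa * x) * I_mul_I
  have e2 : (-π * (I * x) ^ 2 + π * I * qa * (I * x) : ℂ) = π * x ^ 2 + -(π * qa * x) := by
    linear_combination (-π * x ^ 2 + π * qa * x) * I_mul_I
  rw [e1, e2, Complex.exp_add, Complex.exp_add, Complex.exp_neg] at hm
  rw [show (-(π * x ^ 2) - π * qa * x : ℂ) = -(π * x ^ 2) + -(π * qa * x) by ring, Complex.exp_add,
    show (-π * qa * x : ℂ) = -(π * qa * x) by ring, show (-π * x ^ 2 : ℂ) = -(π * x ^ 2) by ring]
  have hsh : 2 * Complex.sinh (π * qa * x) = Complex.exp (π * qa * x) - (Complex.exp (π * qa * x))⁻¹ := by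
    rw [Complex.sinh, Complex.exp_neg]; ring
  have hne : Complex.exp (π * qa * x) - (Complex.exp (π * qa * x))⁻¹ ≠ 0 := by
    rw [← hsh]; exact mul_ne_zero two_ne_zero hs
  rw [hsh, Complex.exp_neg, Complex.exp_neg]
  set A := Complex.exp (π * qa * x)
  set B := Complex.exp (π * x ^ 2)
  have hA : A ≠ 0 := Complex.exp_ne_zero _
  have hB : B ≠ 0 := Complex.exp_ne_zero _
  rw [mul_div_assoc', eq_div_iff hne]
  have key : Xf β (I * x) * (A - A⁻¹) = 2 * qa * (A - B) := by
    have : (A - A⁻¹) = A * (1 - A⁻¹ * A⁻¹) := by field_simp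
    rw [this]
    have h3 : 2 * qa * (A - B) = A * (2 * qa * (1 - B * A⁻¹)) := by field_simp
    rw [h3, ← hm]; ring
  calc _ = B⁻¹ * A⁻¹ * (Xf β (I * x) * (A - A⁻¹)) := by ring
    _ = _ := by rw [key]; field_simp; ring

lemma line1 {s : ℂ} (hs0 : 0 < s.re) {c : ℝ} (hc : -(1/2) < c) (hc' : c < 1/2) :
    lineInt c (-(π/4)) (fun u =>
        Complex.exp (-((π : ℂ) * Complex.I * u ^ 2) + (π : ℂ) * Complex.I * u) /
          (2 * Complex.I * Complex.cos ((π : ℂ) * u)) *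
        ((Complex.Gamma s)⁻¹ *
          ∫ w in Set.Ioi (0 : ℝ),
            Complex.exp (-((w : ℂ) ^ 2 / 2) -
                (Real.sqrt (2 * π) : ℂ) * Complex.exp ((π : ℂ) * Complex.I / 4) * u * (w : ℂ)) *
              (w : ℂ) ^ (s - 1))) =
    ((2 * π : ℝ) : ℂ) ^ (s / 2) * (Complex.Gamma s)⁻¹ * (qa * ∫ x in Ioi (0:ℝ), (x : ℂ) ^ (s - 1) * phi x) := by
  set β : ℝ := c - 1 / 2 with hβd
  have h0 : -1 < β := by linarith
  have h1 : β < 0 := by linarith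
  have hβ : |β| < 1 := abs_lt.mpr ⟨h0, by linarith⟩
  have hβ0 : β ≠ 0 := h1.ne
  rw [lineInt, theta_exp]
  have hu : ∀ t : ℝ, (c : ℂ) + qb * t = 1 / 2 + qb * (t + β * qa) := by
    intro t
    rw [hβd]; push_cast
    linear_combination (-(c - 1 / 2) : ℂ) * qa_mul_qb
  have e1 : ∀ t : ℝ, (fun u : ℂ => Complex.exp (-((π : ℂ) * Complex.I * u ^ 2) + (π : ℂ) * Complex.I * u) /
          (2 * Complex.I * Complex.cos ((π : ℂ) * u)) *
        ((Complex.Gamma s)⁻¹ *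
          ∫ w in Set.Ioi (0 : ℝ),
            Complex.exp (-((w : ℂ) ^ 2 / 2) -
                (Real.sqrt (2 * π) : ℂ) * Complex.exp ((π : ℂ) * Complex.I / 4) * u * (w : ℂ)) *
              (w : ℂ) ^ (s - 1))) ((c : ℂ) + qb * t) * qb =
      (-(1 / 2) * (((2 * π : ℝ) : ℂ) ^ (s / 2) * (Complex.Gamma s)⁻¹)) * ∫ x in Ioi (0:ℝ), GG s β t x := by
    intro t
    simp only [hu]
    rw [u_factor, ← qa]
    have := w_int s (qa * (1 / 2 + qb * (t + β * qa)))
    simp only [← mul_assoc] at this ⊢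
    rw [this]
    have e2 : ∫ x in Ioi (0:ℝ), GG s β t x = Complex.exp (-π * (t + β * qa) ^ 2) * (Complex.sinh (π * qa * (t + β * qa)))⁻¹ *
        ∫ x in Ioi (0:ℝ), (x : ℂ) ^ (s - 1) * Complex.exp (-(π * x ^ 2) - 2 * π * qa * (1 / 2 + qb * (t + β * qa)) * x) := by
      rw [← integral_const_mul]
      congr 1; ext x
      rw [GG, Gf, div_eq_mul_inv]
      have e3 : Complex.exp (-(π * x ^ 2) - 2 * π * qa * (1 / 2 + qb * (t + β * qa)) * x) =
        Complex.exp (-(π * x ^ 2) - π * qa * x) * Complex.exp (2 * π * I * (t + β * qa) * (I * x)) := by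
        rw [← Complex.exp_add]; congr 1
        linear_combination (-2 * π * (t + β * qa) * x) * qa_mul_qb - 2 * π * (t + β * qa) * x * I_mul_I
      rw [e3]; ring
    rw [e2]
    generalize (∫ x in Ioi (0:ℝ), (x : ℂ) ^ (s - 1) * Complex.exp (-(π * x ^ 2) - 2 * π * qa * (1 / 2 + qb * (t + β * qa)) * x)) = J
    generalize Complex.exp (-π * (t + β * qa) ^ 2) = P
    generalize (Complex.sinh (π * qa * (t + β * qa)))⁻¹ = Q
    generalize ((2 * π : ℝ) : ℂ) ^ (s / 2) = R
    linear_combination (-(1 / 2) * P * Q * (Complex.Gamma s)⁻¹ * R * J) * qa_mul_qb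
  simp_rw [e1]
  rw [integral_const_mul, integral_integral_swap (GG_int hs0 hβ0 hβ)]
  have e4 : ∀ x ∈ Ioi (0:ℝ), ∫ t : ℝ, GG s β t x = (-2 * qa) * ((x : ℂ) ^ (s - 1) * phi x) := by
    intro x hx
    simp only [GG]
    rw [integral_const_mul, ← Xf, mul_assoc, Xf_phi h0 h1 hx]
    ring
  rw [setIntegral_congr_fun measurableSet_Ioi e4, integral_const_mul]
  ring

lemma conj_cpow_pos {x : ℝ} (hx : 0 < x) (b : ℂ) :
    (starRingEnd ℂ) ((x : ℂ) ^ b) = (x : ℂ) ^ ((starRingEnd ℂ) b) := by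
  rw [cpow_pos hx, cpow_pos hx, ← Complex.exp_conj]
  simp

lemma theta_exp3 : Complex.exp (((-(3 * π / 4) : ℝ) : ℂ) * I) = -qa := by
  have : (((-(3 * π / 4) : ℝ) : ℂ) * I) = π * I / 4 - π * I := by push_cast; ring
  rw [this, Complex.exp_sub, Complex.exp_pi_mul_I, ← qa, div_neg, div_one]

lemma qa_conj' : (starRingEnd ℂ) qb = qa := by rw [← qb_conj]; simp

lemma line2 {s : ℂ} (hs1 : s.re < 1) {c : ℝ} (hc : -(1/2) < c) (hc' : c < 1/2) :
    lineInt c (-(3 * π / 4)) (fun u =>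
        Complex.exp ((π : ℂ) * Complex.I * u ^ 2 - (π : ℂ) * Complex.I * u) /
          (2 * Complex.I * Complex.cos ((π : ℂ) * u)) *
        ((Complex.Gamma (1 - s))⁻¹ *
          ∫ w in Set.Ioi (0 : ℝ),
            Complex.exp (-((w : ℂ) ^ 2 / 2) -
                (Real.sqrt (2 * π) : ℂ) * Complex.exp (-((π : ℂ) * Complex.I / 4)) * u * (w : ℂ)) *
              (w : ℂ) ^ (-s))) =
    ((2 * π : ℝ) : ℂ) ^ ((1 - s) / 2) * (Complex.Gamma (1 - s))⁻¹ *
      (qb * ∫ x in Ioi (0:ℝ), (x : ℂ) ^ (-s) * (starRingEnd ℂ) (phi x)) := by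
  set s1 : ℂ := (starRingEnd ℂ) (1 - s) with hs1d
  have hs1re : 0 < s1.re := by simp [hs1d]; linarith
  have hcs : (starRingEnd ℂ) s1 = 1 - s := by rw [hs1d]; simp
  have h := congrArg (starRingEnd ℂ) (line1 hs1re hc hc')
  have hR : (starRingEnd ℂ) (((2 * π : ℝ) : ℂ) ^ (s1 / 2) * (Complex.Gamma s1)⁻¹ * (qa * ∫ x in Ioi (0:ℝ), (x : ℂ) ^ (s1 - 1) * phi x)) =
    ((2 * π : ℝ) : ℂ) ^ ((1 - s) / 2) * (Complex.Gamma (1 - s))⁻¹ *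
      (qb * ∫ x in Ioi (0:ℝ), (x : ℂ) ^ (-s) * (starRingEnd ℂ) (phi x)) := by
    rw [map_mul, map_mul, map_mul, conj_cpow_pos (by positivity), map_inv₀, ← Complex.Gamma_conj, hcs, qb_conj,
      ← integral_conj, map_div₀, hcs]
    have e2 : (starRingEnd ℂ) (2:ℂ) = 2 := map_ofNat _ 2
    rw [e2]
    congr 2
    · refine setIntegral_congr_fun measurableSet_Ioi (fun x hx => ?_)
      simp only [map_mul, conj_cpow_pos hx, map_sub, hcs, map_one]
      congr 2; ring
  rw [hR] at h
  rw [← h, lineInt, lineInt, theta_exp, theta_exp3, ← integral_conj, ← integral_neg_eq_self]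
  congr 1; ext t
  have hu : (starRingEnd ℂ) ((c : ℂ) + qb * t) = (c : ℂ) + -qa * ((-t : ℝ) : ℂ) := by
    simp [qa_conj']
  set u := (c : ℂ) + -qa * ((-t : ℝ) : ℂ)
  set v := (c : ℂ) + qb * t
  have hv : v = (starRingEnd ℂ) u := by rw [← hu]; simp
  have hI : (starRingEnd ℂ) (∫ w in Set.Ioi (0 : ℝ),
            Complex.exp (-((w : ℂ) ^ 2 / 2) -
                (Real.sqrt (2 * π) : ℂ) * Complex.exp ((π : ℂ) * Complex.I / 4) * v * (w : ℂ)) *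
              (w : ℂ) ^ (s1 - 1)) = ∫ w in Set.Ioi (0 : ℝ),
            Complex.exp (-((w : ℂ) ^ 2 / 2) -
                (Real.sqrt (2 * π) : ℂ) * Complex.exp (-((π : ℂ) * Complex.I / 4)) * u * (w : ℂ)) *
              (w : ℂ) ^ (-s) := by
    rw [← integral_conj, ← qa, ← qb]
    refine setIntegral_congr_fun measurableSet_Ioi (fun x hx => ?_)
    simp only [map_mul, conj_cpow_pos hx, map_sub, hcs, map_one, ← Complex.exp_conj, map_neg, map_div₀,
      map_pow, Complex.conj_ofReal, qb_conj, hu, map_ofNat]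
    congr 2
    ring
  rw [map_mul, map_mul, map_mul, hI, map_div₀, ← Complex.exp_conj, map_inv₀, ← Complex.Gamma_conj, hcs, qa_conj']
  simp only [map_mul, map_add, map_neg, map_pow, Complex.conj_ofReal, Complex.conj_I, map_ofNat, hu, ← Complex.cos_conj]
  rw [show -(π * -I * u ^ 2) + π * -I * u = π * I * u ^ 2 - π * I * u by ring,
    show 2 * -I * Complex.cos (π * u) = -(2 * I * Complex.cos (π * u)) by ring, div_neg]
  ring

noncomputable def gz (z : ℂ) : ℂ := (Complex.exp z - 1)⁻¹ - z⁻¹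

lemma sector_norm {z : ℂ} (h : |z.im| ≤ z.re) : ‖z‖ ≤ 2 * z.re := by
  have h1 := Complex.norm_le_abs_re_add_abs_im z
  have h0 : 0 ≤ z.re := (abs_nonneg _).trans h
  rw [abs_of_nonneg h0] at h1
  linarith

lemma exp_sub_one_lower (z : ℂ) : z.re ≤ ‖Complex.exp z - 1‖ := by
  have h1 : ‖Complex.exp z‖ - ‖(1:ℂ)‖ ≤ ‖Complex.exp z - 1‖ := norm_sub_norm_le _ _
  rw [Complex.norm_exp, norm_one] at h1
  linarith [Real.add_one_le_exp z.re]

lemma exp_sub_one_ne {z : ℂ} (h0 : 0 < z.re) : Complex.exp z - 1 ≠ 0 := by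
  rw [← norm_pos_iff]; exact h0.trans_le (exp_sub_one_lower z)

lemma gz_bound2 {z : ℂ} (h0 : 0 < z.re) (h : |z.im| ≤ z.re) : ‖gz z‖ ≤ 3 / ‖z‖ := by
  have hz : z ≠ 0 := by rintro rfl; simp at h0
  have hz' : 0 < ‖z‖ := norm_pos_iff.2 hz
  have h1 := sector_norm h
  have h2 := exp_sub_one_lower z
  have h3 : ‖Complex.exp z - 1‖⁻¹ ≤ (‖z‖ / 2)⁻¹ := inv_anti₀ (by positivity) (by linarith)
  calc ‖gz z‖ ≤ ‖(Complex.exp z - 1)⁻¹‖ + ‖z⁻¹‖ := norm_sub_le _ _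
    _ ≤ (‖z‖ / 2)⁻¹ + ‖z‖⁻¹ := by rw [norm_inv, norm_inv]; linarith
    _ = 3 / ‖z‖ := by field_simp; norm_num

lemma gz_bound1 {z : ℂ} (h0 : 0 < z.re) (h : |z.im| ≤ z.re) : ‖gz z‖ ≤ 3 := by
  have hz : z ≠ 0 := by rintro rfl; simp at h0
  have hz' : 0 < ‖z‖ := norm_pos_iff.2 hz
  rcases le_total ‖z‖ 1 with h1 | h1
  · have h2 := Complex.norm_exp_sub_one_sub_id_le h1
    have h3 := exp_sub_one_lower z
    have h4 := sector_norm h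
    have hne := exp_sub_one_ne h0
    have : gz z = -(Complex.exp z - 1 - z) / (z * (Complex.exp z - 1)) := by
      unfold gz; field_simp; ring
    rw [this, norm_div, norm_neg, norm_mul, div_le_iff₀ (by positivity)]
    nlinarith
  · refine (gz_bound2 h0 h).trans ?_
    rw [div_le_iff₀ hz']; linarith

lemma gz_diff {z : ℂ} (h0 : 0 < z.re) : DifferentiableAt ℂ gz z := by
  have hz : z ≠ 0 := by rintro rfl; simp at h0
  unfold gz
  exact ((Complex.differentiable_exp.differentiableAt.sub_const _).inv (exp_sub_one_ne h0)).sub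
    (differentiableAt_id.inv hz)

lemma phih_phi {x : ℝ} (hx : 0 < x) :
    qa * phih x + (starRingEnd ℂ) (phi x) = gz (2 * π * qb * x) := by
  have h1 : (starRingEnd ℂ) (phi x) =
      (Complex.exp (-π * qb * x) - Complex.exp (-π * (x:ℂ) ^ 2)) / (2 * Complex.sinh (π * qb * x)) := by
    unfold phi
    rw [sinh_qb_eq, map_div₀, map_sub, ← Complex.exp_conj, ← Complex.exp_conj]
    have h2 : (starRingEnd ℂ) 2 = 2 := Complex.conj_ofReal 2
    simp [qb_conj, h2]
  have hne := sinh_qb_ne hx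
  have h2 := sub_coth_aux hne
  have hx' : (x:ℂ) ≠ 0 := by exact_mod_cast hx.ne'
  have hpi : (π:ℂ) ≠ 0 := by exact_mod_cast Real.pi_ne_zero
  have h3 : (2 * π * qb * x)⁻¹ = qa * (1 / (2 * π * x : ℂ)) := by
    have := qa_mul_qb
    have hb := qb_ne
    field_simp
    linear_combination -this
  rw [h1, phih_eq hx, gz, h3, mul_sub, ← mul_assoc, qa_mul_qb, sub_div]
  have e1 : (2 * π * qb * x : ℂ) = 2 * (π * qb * x) := by ring
  have e2 : (-π * qb * x : ℂ) = -(π * qb * x) := by ring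
  rw [e1, e2, h2]; ring

lemma mellin_exp (f : ℝ → ℂ) (s : ℂ) :
    ∫ x in Ioi (0:ℝ), (x:ℂ) ^ (s - 1) * f x = ∫ t : ℝ, Complex.exp (s * t) * f (Real.exp t) := by
  rw [← Real.range_exp, ← image_univ, integral_image_eq_integral_abs_deriv_smul
        MeasurableSet.univ (fun x _ => (Real.hasDerivAt_exp x).hasDerivWithinAt)
        Real.exp_injective.injOn]
  simp only [Measure.restrict_univ]
  congr 1; ext t
  rw [abs_of_pos (Real.exp_pos t), cpow_pos (Real.exp_pos t), Real.log_exp, Complex.real_smul,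
    Complex.ofReal_exp, ← mul_assoc, ← Complex.exp_add]
  congr 2; ring

lemma gz_rot {s : ℂ} (hs0 : 0 < s.re) (hs1 : s.re < 1) :
    ∫ x in Ioi (0:ℝ), (x:ℂ) ^ (s - 1) * gz (2 * π * x) =
      Complex.exp (-(s * (π * I / 4))) * ∫ x in Ioi (0:ℝ), (x:ℂ) ^ (s - 1) * gz (2 * π * qb * x) := by
  rw [mellin_exp (fun x => gz (2 * π * x)), mellin_exp (fun x => gz (2 * π * qb * x)),
    ← integral_const_mul]
  have hpi3 := Real.pi_gt_three
  have hpi4 := Real.pi_lt_four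
  have himre : ∀ z : ℂ, z.im ∈ uIcc 0 (-(π/4)) →
      0 < (2 * π * Complex.exp z).re ∧ |(2 * π * Complex.exp z).im| ≤ (2 * π * Complex.exp z).re := by
    intro z hz
    rw [uIcc_of_ge (by linarith)] at hz
    have hc : 0 < Real.cos z.im := Real.cos_pos_of_mem_Ioo ⟨by linarith [hz.1], by linarith [hz.2]⟩
    have hsn : Real.sin z.im ≤ 0 := Real.sin_nonpos_of_nonpos_of_neg_pi_le hz.2 (by linarith [hz.1])
    have hle : -Real.sin z.im ≤ Real.cos z.im := by
      rw [← Real.sin_neg, ← Real.cos_neg, ← Real.sin_pi_div_two_sub]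
      exact Real.sin_le_sin_of_le_of_le_pi_div_two (by linarith [hz.2]) (by linarith [hz.2]) (by linarith [hz.1])
    have e1 : (2 * π * Complex.exp z).re = 2 * π * (Real.exp z.re * Real.cos z.im) := by
      rw [← Complex.exp_re]; simp
    have e2 : (2 * π * Complex.exp z).im = 2 * π * (Real.exp z.re * Real.sin z.im) := by
      rw [← Complex.exp_im]; simp
    have hE := Real.exp_pos z.re
    rw [e1, e2, abs_le]
    refine ⟨by positivity, ?_, ?_⟩
    · have : 0 ≤ 2 * π * Real.exp z.re * (Real.cos z.im + Real.sin z.im) :=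
        mul_nonneg (by positivity) (by linarith)
      nlinarith
    · have : 0 ≤ 2 * π * Real.exp z.re * (Real.cos z.im - Real.sin z.im) :=
        mul_nonneg (by positivity) (by linarith)
      nlinarith
  have key := strip_shift (fun z => Complex.exp (s * z) * gz (2 * π * Complex.exp z)) 0 (-(π/4))
    (3 * Real.exp (|s.im| * 1)) (min s.re (1 - s.re)) (lt_min hs0 (by linarith)) ?_ ?_
  · simp only [Complex.ofReal_zero, zero_mul, add_zero] at key
    simp only [Complex.ofReal_exp]
    rw [key]
    congr 1; ext t
    have e1 : Complex.exp (t + ((-(π/4) : ℝ) : ℂ) * I) = qb * Complex.exp t := by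
      rw [qb, ← Complex.exp_add]; congr 1; push_cast; ring
    rw [e1, ← mul_assoc (Complex.exp _), ← Complex.exp_add]
    congr 2
    · push_cast; ring
    · ring
  · intro z hz
    refine DifferentiableAt.differentiableWithinAt ?_
    have := gz_diff (himre z hz).1
    have h2 : DifferentiableAt ℂ (fun z => gz (2 * π * Complex.exp z)) z :=
      DifferentiableAt.comp z (g := gz) this (by fun_prop)
    exact DifferentiableAt.mul (by fun_prop) h2
  · intro z hz
    obtain ⟨h0, h1⟩ := himre z hz
    have b1 := gz_bound1 h0 h1
    have b2 := gz_bound2 h0 h1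
    have hn : ‖(2 * π * Complex.exp z : ℂ)‖ = 2 * π * Real.exp z.re := by
      rw [norm_mul, norm_mul, Complex.norm_exp, Complex.norm_real, Real.norm_of_nonneg Real.pi_pos.le]
      simp
    rw [hn] at b2
    have b3 : ‖gz (2 * π * Complex.exp z)‖ ≤ 3 * Real.exp (- z.re) := by
      refine b2.trans ?_
      rw [Real.exp_neg, div_eq_mul_inv]
      gcongr
      nlinarith [Real.exp_pos z.re]
    have hz1 : |z.im| ≤ 1 := by
      rw [uIcc_of_ge (by linarith)] at hz
      rw [abs_le]; constructor <;> linarith [hz.1, hz.2]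
    have hre : (s * z).re ≤ s.re * z.re + |s.im| * 1 := by
      rw [Complex.mul_re]
      have : -(s.im * z.im) ≤ |s.im| * 1 := by
        refine (neg_le_abs _).trans ?_
        rw [abs_mul]; gcongr
      linarith
    rw [norm_mul, Complex.norm_exp]
    rcases le_total 0 z.re with h | h
    · rw [abs_of_nonneg h]
      calc Real.exp (s * z).re * ‖gz (2 * π * Complex.exp z)‖
          ≤ Real.exp (s.re * z.re + |s.im| * 1) * (3 * Real.exp (- z.re)) := by gcongr
        _ = 3 * Real.exp (|s.im| * 1) * Real.exp (s.re * z.re - z.re) := by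
            rw [sub_eq_add_neg, Real.exp_add, Real.exp_add]; ring
        _ ≤ _ := by
            gcongr
            nlinarith [min_le_right s.re (1 - s.re)]
    · rw [abs_of_nonpos h]
      calc Real.exp (s * z).re * ‖gz (2 * π * Complex.exp z)‖
          ≤ Real.exp (s.re * z.re + |s.im| * 1) * 3 := by gcongr
        _ = 3 * Real.exp (|s.im| * 1) * Real.exp (s.re * z.re) := by
            rw [Real.exp_add]; ring
        _ ≤ _ := by
            have : s.re * z.re ≤ min s.re (1 - s.re) * z.re :=
              mul_le_mul_of_nonpos_right (min_le_left s.re (1 - s.re)) h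
            refine mul_le_mul_of_nonneg_left (Real.exp_le_exp.2 ?_) (by positivity)
            linarith

noncomputable def hz (x : ℝ) : ℂ := (Complex.exp x - 1)⁻¹ - Complex.exp (-x) / x
noncomputable def ez (x : ℝ) : ℂ := (Complex.exp (-x) - 1) / x

lemma gz_eq_hz (x : ℝ) : gz x = hz x + ez x := by
  unfold gz hz ez; ring

lemma ez_bound1 {x : ℝ} (hx : 0 < x) : ‖ez x‖ ≤ 2 := by
  unfold ez
  have := norm_exp_sub_one_le' (w := -(x:ℂ)) (by simpa using hx.le)
  rw [norm_neg, Complex.norm_real, Real.norm_of_nonneg hx.le] at this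
  rw [norm_div, Complex.norm_real, Real.norm_of_nonneg hx.le, div_le_iff₀ hx]
  exact this

lemma exp_sub_one_norm {x : ℝ} (hx : 0 < x) : ‖Complex.exp (-x) - 1‖ ≤ 1 := by
  have : Complex.exp (-x) - 1 = ((Real.exp (-x) - 1 : ℝ) : ℂ) := by push_cast; rfl
  rw [this, Complex.norm_real, Real.norm_eq_abs, abs_le]
  have := Real.exp_pos (-x)
  have : Real.exp (-x) ≤ 1 := Real.exp_le_one_iff.2 (by linarith)
  constructor <;> linarith

lemma ez_bound2 {x : ℝ} (hx : 0 < x) : ‖ez x‖ ≤ 2 / x := by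
  unfold ez
  rw [norm_div, Complex.norm_real, Real.norm_of_nonneg hx.le]
  gcongr
  linarith [exp_sub_one_norm hx]

lemma gz_real_bound1 {x : ℝ} (hx : 0 < x) : ‖gz x‖ ≤ 3 := gz_bound1 (by simpa using hx) (by simpa using hx.le)
lemma gz_real_bound2 {x : ℝ} (hx : 0 < x) : ‖gz x‖ ≤ 3 / x := by
  have := gz_bound2 (z := (x:ℂ)) (by simpa using hx) (by simpa using hx.le)
  rwa [Complex.norm_real, Real.norm_of_nonneg hx.le] at this

lemma hz_bound1 {x : ℝ} (hx : 0 < x) : ‖hz x‖ ≤ 5 := by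
  have : hz x = gz x - ez x := by rw [gz_eq_hz]; ring
  rw [this]
  refine (norm_sub_le _ _).trans ?_
  linarith [gz_real_bound1 hx, ez_bound1 hx]

lemma ez_cont : ContinuousOn ez (Ioi 0) := by
  unfold ez
  refine ContinuousOn.div (by fun_prop) (by fun_prop) ?_
  intro x hx; exact_mod_cast (ne_of_gt hx)

lemma hz_cont : ContinuousOn hz (Ioi 0) := by
  unfold hz
  refine ContinuousOn.sub (ContinuousOn.inv₀ (by fun_prop) ?_) (ContinuousOn.div (by fun_prop) (by fun_prop) ?_)
  · intro x hx; exact exp_sub_one_ne (by simpa using hx)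
  · intro x hx; exact_mod_cast (ne_of_gt hx)

lemma hz_top : hz =O[Filter.atTop] fun t : ℝ => Real.exp (-1 * t) := by
  refine Asymptotics.IsBigO.of_bound 3 ?_
  filter_upwards [Filter.eventually_ge_atTop 1] with x hx
  have hx0 : 0 < x := by linarith
  rw [Real.norm_of_nonneg (Real.exp_pos _).le, neg_one_mul]
  have e1 : ‖Complex.exp (-x) / x‖ ≤ Real.exp (-x) := by
    rw [norm_div, Complex.norm_exp, Complex.norm_real, Real.norm_of_nonneg hx0.le]
    simpa using div_le_self (Real.exp_pos (-x)).le hx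
  have e2 : ‖(Complex.exp x - 1)⁻¹‖ ≤ 2 * Real.exp (-x) := by
    have : Real.exp x - 1 ≤ ‖Complex.exp x - 1‖ := by
      have h1 : ‖Complex.exp x‖ - ‖(1:ℂ)‖ ≤ ‖Complex.exp x - 1‖ := norm_sub_norm_le _ _
      rwa [Complex.norm_exp, norm_one, Complex.ofReal_re] at h1
    have h2 : 2 ≤ Real.exp x := by linarith [Real.add_one_le_exp x]
    rw [norm_inv, Real.exp_neg]
    calc ‖Complex.exp x - 1‖⁻¹ ≤ (Real.exp x / 2)⁻¹ := inv_anti₀ (by positivity) (by linarith)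
      _ = _ := by rw [inv_div]; rfl
  unfold hz
  refine (norm_sub_le _ _).trans ?_
  linarith

lemma hz_bot : hz =O[nhdsWithin 0 (Ioi 0)] fun x : ℝ => x ^ (-(0:ℝ)) := by
  refine Asymptotics.IsBigO.of_bound 5 ?_
  filter_upwards [self_mem_nhdsWithin] with x hx
  simpa using hz_bound1 hx

lemma hz_mellin_diff {s : ℂ} (hs : 0 < s.re) : DifferentiableAt ℂ (mellin hz) s :=
  mellin_differentiableAt_of_isBigO_rpow_exp one_pos (hz_cont.locallyIntegrableOn measurableSet_Ioi)
    hz_top hz_bot hs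

lemma hz_mellin_conv {s : ℂ} (hs : 0 < s.re) : MellinConvergent hz s :=
  mellinConvergent_of_isBigO_rpow_exp one_pos (hz_cont.locallyIntegrableOn measurableSet_Ioi)
    hz_top hz_bot hs

lemma mellin_bose {s : ℂ} (hs : 1 < s.re) :
    mellin (fun x : ℝ => (Complex.exp x - 1)⁻¹) s = Gamma s * riemannZeta s := by
  have h := hasSum_mellin (a := fun _ : ℕ => (1:ℂ)) (p := fun n : ℕ => (n:ℝ) + 1) (s := s)
    (F := fun x : ℝ => (Complex.exp x - 1)⁻¹) (fun i => Or.inr (by positivity)) (by linarith) ?_ ?_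
  · rw [← h.tsum_eq, zeta_eq_tsum_one_div_nat_add_one_cpow hs, ← tsum_mul_left]
    congr 1; ext n; push_cast; ring
  · intro t ht
    have ht' : (0:ℝ) < t := ht
    have hn : ‖Complex.exp (-t)‖ < 1 := by
      rw [Complex.norm_exp]; simpa using ht'
    have h1 := (hasSum_geometric_of_norm_lt_one hn).mul_left (Complex.exp (-t))
    convert! h1 using 1
    · ext n
      rw [one_mul, ← Complex.exp_nat_mul, ← Complex.exp_add, Complex.ofReal_exp]
      congr 1; push_cast; ring
    · rw [Complex.exp_neg, ← mul_inv_rev, inv_inj]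
      have := Complex.exp_ne_zero (t:ℂ)
      field_simp
  · have := (Real.summable_one_div_nat_rpow (p := s.re)).2 hs
    have := (summable_nat_add_iff 1).2 this
    simpa using this

lemma mellin_hz_gt {s : ℂ} (hs : 1 < s.re) :
    mellin hz s = Gamma s * riemannZeta s - Gamma (s - 1) := by
  have hE := Complex.GammaIntegral_convergent (s := s - 1) (by simpa using hs)
  rw [Complex.Gamma_eq_integral (s := s - 1) (by simpa using hs), ← mellin_bose hs]
  unfold Complex.GammaIntegral mellin
  rw [eq_sub_iff_add_eq, ← integral_add (hz_mellin_conv (by linarith)) hE]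
  refine setIntegral_congr_fun measurableSet_Ioi fun x hx => ?_
  have hx' : (x:ℂ) ≠ 0 := by exact_mod_cast (ne_of_gt hx)
  simp only [smul_eq_mul, hz]
  rw [Complex.cpow_sub (s - 1) 1 hx', Complex.cpow_one]
  push_cast
  ring

lemma mellin_hz {s : ℂ} (hs : 0 < s.re) (hs1 : s ≠ 1) :
    mellin hz s = Gamma s * riemannZeta s - Gamma s / (s - 1) := by
  let U : Set ℂ := {z | 0 < z.re}
  have hU : IsOpen U := isOpen_lt continuous_const Complex.continuous_re
  have hne : ∀ z ∈ U, z ≠ 0 := by rintro z hz rfl; simp [U] at hz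
  let f : ℂ → ℂ := fun s => (s - 1) * mellin hz s
  let g : ℂ → ℂ := fun s => Gamma s * (((s - 1) * (completedRiemannZeta₀ s - 1 / s) + 1) * (Gammaℝ s)⁻¹ - 1)
  have hf : AnalyticOnNhd ℂ f U := by
    refine DifferentiableOn.analyticOnNhd (fun z hz => DifferentiableAt.differentiableWithinAt ?_) hU
    exact DifferentiableAt.mul (by fun_prop) (hz_mellin_diff hz)
  have hg : AnalyticOnNhd ℂ g U := by
    refine DifferentiableOn.analyticOnNhd (fun z hz => DifferentiableAt.differentiableWithinAt ?_) hU
    have h1 : DifferentiableAt ℂ Gamma z := by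
      refine Complex.differentiableAt_Gamma z fun m h => ?_
      have hz' : 0 < z.re := hz
      rw [h] at hz'
      simp at hz'
      have : (0:ℝ) ≤ m := m.cast_nonneg
      linarith
    have h2 := differentiable_completedZeta₀ z
    have h3 := differentiable_Gammaℝ_inv z
    have h4 : DifferentiableAt ℂ (fun s : ℂ => 1 / s) z :=
      (differentiableAt_const _).div differentiableAt_id (hne z hz)
    exact h1.mul (((((differentiableAt_id.sub_const 1).mul (h2.sub h4)).add_const 1).mul h3).sub_const 1)
  have hgz : ∀ z ∈ U, z ≠ 1 → g z = (z - 1) * (Gamma z * riemannZeta z - Gamma z / (z - 1)) := by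
    intro z hz hz1
    have h1 : z - 1 ≠ 0 := sub_ne_zero.2 hz1
    have h2 : 1 - z ≠ 0 := sub_ne_zero.2 hz1.symm
    simp only [g]
    rw [riemannZeta_def_of_ne_zero (hne z hz), completedRiemannZeta_eq]
    have e : (z - 1) * (completedRiemannZeta₀ z - 1 / z) + 1 =
        (z - 1) * (completedRiemannZeta₀ z - 1 / z - 1 / (1 - z)) := by
      rw [mul_sub (z - 1) _ (1 / (1 - z))]
      have : (z - 1) * (1 / (1 - z)) = -1 := by field_simp; ring
      rw [this]; ring
    rw [e, mul_sub (z - 1) _ (Gamma z / (z - 1)), mul_div_cancel₀ _ h1]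
    ring
  have key : EqOn f g U := by
    refine hf.eqOn_of_preconnected_of_eventuallyEq hg (convex_halfSpace_re_gt 0).isPreconnected
      (z₀ := 2) (by simp [U]) ?_
    have : {z : ℂ | 1 < z.re} ∈ nhds (2:ℂ) :=
      (isOpen_lt continuous_const Complex.continuous_re).mem_nhds (by simp)
    filter_upwards [this] with z hz
    have hz' : 1 < z.re := hz
    have hz1 : z ≠ 1 := by rintro rfl; simp at hz'
    have h1 : z - 1 ≠ 0 := sub_ne_zero.2 hz1
    rw [hgz z (by show 0 < z.re; linarith) hz1]
    simp only [f]
    rw [mellin_hz_gt hz']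
    have := Complex.Gamma_add_one (z - 1) h1
    rw [sub_add_cancel] at this
    congr 2
    rw [this]; field_simp
  have h1 : s - 1 ≠ 0 := sub_ne_zero.2 hs1
  have := key hs
  rw [hgz s hs hs1] at this
  exact mul_left_cancel₀ h1 this

lemma mellin_ez {s : ℂ} (hs0 : 0 < s.re) (hs1 : s.re < 1) :
    ∫ x in Ioi (0:ℝ), (x:ℂ) ^ (s - 1) * ez x = Gamma s / (s - 1) := by
  have hs : s ≠ 1 := by rintro rfl; simp at hs1
  have h1 : s - 1 ≠ 0 := sub_ne_zero.2 hs
  have hre : (s - 1).re = s.re - 1 := by simp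
  have hint := cpow_int ez_cont (fun x hx => ez_bound1 hx) (fun x hx => ez_bound2 hx) hs0 hs1
  have heq : ∀ x ∈ Ioi (0:ℝ), (x:ℂ) ^ (s - 1) * ez x = (Complex.exp (-x) - 1) * (x:ℂ) ^ (s - 1 - 1) := by
    intro x hx
    have hx' : (x:ℂ) ≠ 0 := by exact_mod_cast (ne_of_gt hx)
    rw [Complex.cpow_sub (s - 1) 1 hx', Complex.cpow_one, ez]; ring
  have hE := Complex.GammaIntegral_convergent hs0
  have hnorm : ∀ x : ℝ, 0 < x → ‖(Complex.exp (-x) - 1) * ((x:ℂ) ^ (s - 1) / (s - 1))‖ =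
      ‖Complex.exp (-x) - 1‖ * (x ^ (s.re - 1)) / ‖s - 1‖ := by
    intro x hx
    rw [norm_mul, norm_div, Complex.norm_cpow_eq_rpow_re_of_pos hx, hre, mul_div_assoc]
  have key := integral_Ioi_mul_deriv_eq_deriv_mul (a := (0:ℝ)) (u := fun x : ℝ => Complex.exp (-x) - 1)
    (v := fun x : ℝ => (x:ℂ) ^ (s - 1) / (s - 1)) (u' := fun x : ℝ => -Complex.exp (-x))
    (v' := fun x : ℝ => (x:ℂ) ^ (s - 1 - 1)) (a' := 0) (b' := 0) ?_ ?_ ?_ ?_ ?_ ?_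
  · rw [setIntegral_congr_fun measurableSet_Ioi heq, key, Complex.Gamma_eq_integral hs0,
      Complex.GammaIntegral, sub_zero, zero_sub, ← integral_neg, ← integral_div]
    congr 1; ext x; push_cast; ring
  · intro x hx
    have := ((hasDerivAt_neg x).ofReal_comp.cexp).sub_const 1
    simpa using this
  · intro x hx
    have := (hasDerivAt_ofReal_cpow_const (x := x) (ne_of_gt hx) (r := s - 1) h1).div_const (s - 1)
    rwa [mul_div_cancel_left₀ _ h1] at this
  · exact (integrableOn_congr_fun heq measurableSet_Ioi).1 hint
  · refine (hE.neg.div_const (s - 1)).congr ?_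
    filter_upwards with x
    simp only [Pi.mul_apply, Pi.neg_apply]; push_cast; ring
  · rw [tendsto_zero_iff_norm_tendsto_zero]
    have hlim : Filter.Tendsto (fun x : ℝ => 2 * x ^ s.re / ‖s - 1‖) (nhdsWithin 0 (Ioi 0)) (nhds 0) := by
      have : Filter.Tendsto (fun x : ℝ => 2 * x ^ s.re / ‖s - 1‖) (nhds 0) (nhds (2 * 0 ^ s.re / ‖s - 1‖)) :=
        ((Real.continuousAt_rpow_const 0 s.re (Or.inr hs0.le)).const_mul 2).div_const _
      rw [Real.zero_rpow hs0.ne', mul_zero, zero_div] at this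
      exact this.mono_left nhdsWithin_le_nhds
    refine squeeze_zero' (Filter.Eventually.of_forall fun _ => norm_nonneg _) ?_ hlim
    filter_upwards [self_mem_nhdsWithin] with x hx
    have hx' : 0 < x := hx
    rw [Pi.mul_apply, hnorm x hx']
    have := norm_exp_sub_one_le' (w := -(x:ℂ)) (by simpa using hx'.le)
    rw [norm_neg, Complex.norm_real, Real.norm_of_nonneg hx'.le] at this
    have e : x ^ s.re = x * x ^ (s.re - 1) := by
      rw [Real.rpow_sub_one hx'.ne']; field_simp
    rw [e, ← mul_assoc]
    gcongr
  · rw [tendsto_zero_iff_norm_tendsto_zero]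
    have hlim : Filter.Tendsto (fun x : ℝ => 1 * x ^ (s.re - 1) / ‖s - 1‖) Filter.atTop (nhds 0) := by
      have := ((tendsto_rpow_neg_atTop (y := 1 - s.re) (by linarith)).const_mul 1).div_const ‖s - 1‖
      simpa using this
    refine squeeze_zero' (Filter.Eventually.of_forall fun _ => norm_nonneg _) ?_ hlim
    filter_upwards [Filter.eventually_gt_atTop 0] with x hx'
    rw [Pi.mul_apply, hnorm x hx']
    gcongr
    exact exp_sub_one_norm hx'

lemma mellin_gz {s : ℂ} (hs0 : 0 < s.re) (hs1 : s.re < 1) :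
    mellin (fun x : ℝ => gz x) s = Gamma s * riemannZeta s := by
  have hint := cpow_int ez_cont (fun x hx => ez_bound1 hx) (fun x hx => ez_bound2 hx) hs0 hs1
  have hs : s ≠ 1 := by rintro rfl; simp at hs1
  have h1 := mellin_hz hs0 hs
  have h2 := mellin_ez hs0 hs1
  have h3 := integral_add (hz_mellin_conv hs0) hint
  have h4 : mellin (fun x : ℝ => gz x) s = mellin hz s + ∫ x in Ioi (0:ℝ), (x:ℂ) ^ (s - 1) * ez x := by
    unfold mellin
    rw [← h3]
    congr 1; ext x
    simp only [gz_eq_hz, smul_eq_mul, mul_add]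
  rw [h4, h1, h2]; ring

lemma int_gz {s : ℂ} (hs0 : 0 < s.re) (hs1 : s.re < 1) :
    ∫ x in Ioi (0:ℝ), (x:ℂ) ^ (s - 1) * gz (2 * π * x) =
      ((2 * π : ℝ) : ℂ) ^ (-s) * (Gamma s * riemannZeta s) := by
  have := mellin_comp_mul_left (fun x : ℝ => gz x) s (a := 2 * π) Real.two_pi_pos
  rw [mellin_gz hs0 hs1, mellin, smul_eq_mul] at this
  rw [← this]
  congr 1; ext x; push_cast; rfl

lemma int_sum {s : ℂ} (hs0 : 0 < s.re) (hs1 : s.re < 1) :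
    qa * (∫ x in Ioi (0:ℝ), (x:ℂ) ^ (-s) * phih x) + (∫ x in Ioi (0:ℝ), (x:ℂ) ^ (-s) * (starRingEnd ℂ) (phi x))
      = ∫ x in Ioi (0:ℝ), (x:ℂ) ^ (-s) * gz (2 * π * qb * x) := by
  have e : (1 - s - 1 : ℂ) = -s := by ring
  have h1 : IntegrableOn (fun x : ℝ => (x:ℂ) ^ (-s) * phih x) (Ioi 0) := by
    have := phih_cpow_int (s := 1 - s) (by simp; linarith) (by simp; linarith)
    rwa [e] at this
  have h2 : IntegrableOn (fun x : ℝ => (x:ℂ) ^ (-s) * (starRingEnd ℂ) (phi x)) (Ioi 0) := by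
    have := cpow_int (f := fun x => (starRingEnd ℂ) (phi x)) (s := 1 - s) (C := 16)
      (Complex.continuous_conj.comp_continuousOn phi_contOn) ?_ ?_ (by simp; linarith) (by simp; linarith)
    · rwa [e] at this
    · intro x hx
      rw [RCLike.norm_conj]
      have : Real.exp (-x) ≤ 1 := Real.exp_le_one_iff.mpr (by linarith)
      linarith [phi_bound hx]
    · intro x hx
      rw [RCLike.norm_conj]
      refine (phi_bound hx).trans ?_
      rw [Real.exp_neg, div_eq_mul_inv]
      gcongr
      linarith [Real.add_one_le_exp x]
  rw [← integral_const_mul, ← integral_add (h1.const_mul qa) h2]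
  refine setIntegral_congr_fun measurableSet_Ioi fun x hx => ?_
  rw [← phih_phi hx]; ring

lemma final_alg {a b r r2 p G1 G2 H1 H2 Gs Gt E qa qb M N P Q z zt : ℂ} (ha : a ≠ 0) (hb : b ≠ 0)
    (hr : r ≠ 0) (hH1 : H1 ≠ 0) (hH2 : H2 ≠ 0) (hGs : Gs ≠ 0) (hGt : Gt ≠ 0)
    (hp : p = r ^ 2) (hr2 : r2 ^ 2 = 2) (hq : qa * qb = 1)
    (hfe : b⁻¹ * G1 * z = b / r * G2 * zt)
    (hM : b / p * H2 * M = 1 / (r * b) * H1 * P)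
    (hd1 : G1 * H1 = Gs * (2 / a ^ 2) * r) (hd2 : G2 * H2 = Gt * a ^ 2 * r)
    (hQ : qa * P + N = Q) (hEQ : a ^ 2 * b ^ 2 / (2 * p) * (Gt * zt) = E * Q) :
    b⁻¹ * G1 * z = a * G1 * E * (a * b * Gs⁻¹ * (qa * M)) +
      r2 / a * G2 * (qa * E) * (r2 * r / (a * b) * Gt⁻¹ * (qb * N)) := by
  subst hp
  have hM' : M = r * H1 * P / (b ^ 2 * H2) := by
    field_simp at hM ⊢
    linear_combination hM
  have hG1 : G1 = Gs * (2 / a ^ 2) * r / H1 := by rw [← hd1]; field_simp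
  have hG2 : G2 = Gt * a ^ 2 * r / H2 := by rw [← hd2]; field_simp
  have h2 : r2 / a * G2 * (qa * E) * (r2 * r / (a * b) * Gt⁻¹ * (qb * N)) =
      (r2 ^ 2) * (qa * qb) * (G2 * E * r * Gt⁻¹ * N / (a ^ 2 * b)) := by
    field_simp
  have h3 : a * G1 * E * (a * b * Gs⁻¹ * (qa * M)) = 2 * r ^ 2 / (b * H2) * (E * (qa * P)) := by
    rw [hG1, hM']; field_simp
  have h4 : 2 * 1 * (G2 * E * r * Gt⁻¹ * N / (a ^ 2 * b)) = 2 * r ^ 2 / (b * H2) * (E * N) := by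
    rw [hG2]; field_simp
  rw [hfe, h2, hr2, hq, h3, h4, ← mul_add, ← mul_add, hQ, ← hEQ, hG2]
  field_simp

/-- The Riemann–Siegel integral formula with both integrals written via the real
integral representation of the parabolic cylinder functions
`U(s - 1/2, √(2π) e^{iπ/4} u)` and `U(1/2 - s, √(2π) e^{-iπ/4} u)`. -/
theorem riemann_siegel_integral_formula (s : ℂ) (hs₀ : 0 < s.re) (hs₁ : s.re < 1)
    (c c' : ℝ) (hc : -(1/2) < c) (hc' : c < 1/2) (hc₁ : -(1/2) < c') (hc₂ : c' < 1/2) :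
    (π : ℂ) ^ (-s / 2) * Complex.Gamma (s / 2) * riemannZeta s =
    (2 : ℂ) ^ (s / 2) * Complex.Gamma (s / 2) *
        Complex.exp (-((π : ℂ) * Complex.I * (1 - s) / 4)) *
      lineInt c (-(π/4)) (fun u =>
        Complex.exp (-((π : ℂ) * Complex.I * u ^ 2) + (π : ℂ) * Complex.I * u) /
          (2 * Complex.I * Complex.cos ((π : ℂ) * u)) *
        ((Complex.Gamma s)⁻¹ *
          ∫ w in Set.Ioi (0 : ℝ),
            Complex.exp (-((w : ℂ) ^ 2 / 2) -
                (Real.sqrt (2 * π) : ℂ) * Complex.exp ((π : ℂ) * Complex.I / 4) * u * (w : ℂ)) *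
              (w : ℂ) ^ (s - 1))) +
    (2 : ℂ) ^ ((1 - s) / 2) * Complex.Gamma ((1 - s) / 2) *
        Complex.exp ((π : ℂ) * Complex.I * s / 4) *
      lineInt c' (-(3 * π / 4)) (fun u =>
        Complex.exp ((π : ℂ) * Complex.I * u ^ 2 - (π : ℂ) * Complex.I * u) /
          (2 * Complex.I * Complex.cos ((π : ℂ) * u)) *
        ((Complex.Gamma (1 - s))⁻¹ *
          ∫ w in Set.Ioi (0 : ℝ),
            Complex.exp (-((w : ℂ) ^ 2 / 2) -
                (Real.sqrt (2 * π) : ℂ) * Complex.exp (-((π : ℂ) * Complex.I / 4)) * u * (w : ℂ)) *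
              (w : ℂ) ^ (-s))) := by
  have hpi : (π:ℂ) ≠ 0 := by exact_mod_cast Real.pi_ne_zero
  have h20 : (2:ℂ) ≠ 0 := two_ne_zero
  have hs : s ≠ 0 := by rintro rfl; simp at hs₀
  have hst : 1 - s ≠ 0 := by
    intro h; have := congrArg Complex.re h; simp at this; linarith
  have hG : ∀ w : ℂ, 0 < w.re → Gamma w ≠ 0 := fun w hw => Complex.Gamma_ne_zero_of_re_pos hw
  rw [line1 hs₀ hc hc', line2 hs₁ hc₁ hc₂]
  have e1 : (2:ℂ) ^ ((1 - s) / 2) = (2:ℂ) ^ (1/2 : ℂ) / (2:ℂ) ^ (s / 2) := by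
    rw [← Complex.cpow_sub _ _ h20]; congr 1; ring
  have m : ∀ w : ℂ, ((2 * π : ℝ) : ℂ) ^ w = (2:ℂ) ^ w * (π:ℂ) ^ w := by
    intro w
    rw [Complex.ofReal_mul, Complex.mul_cpow_ofReal_nonneg (by norm_num) Real.pi_pos.le]; norm_num
  have e2 : (π:ℂ) ^ ((1 - s) / 2) = (π:ℂ) ^ (1/2 : ℂ) / (π:ℂ) ^ (s / 2) := by
    rw [← Complex.cpow_sub _ _ hpi]; congr 1; ring
  have sq2 : ((2:ℂ) ^ (1/2 : ℂ)) ^ 2 = 2 := by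
    rw [sq, ← Complex.cpow_add _ _ h20]; norm_num
  have sqp : (π:ℂ) = ((π:ℂ) ^ (1/2 : ℂ)) ^ 2 := by
    rw [sq, ← Complex.cpow_add _ _ hpi]; norm_num
  have s2 : (2:ℂ) ^ s = ((2:ℂ) ^ (s / 2)) ^ 2 := by
    rw [sq, ← Complex.cpow_add _ _ h20]; congr 1; ring
  have sp : (π:ℂ) ^ s = ((π:ℂ) ^ (s / 2)) ^ 2 := by
    rw [sq, ← Complex.cpow_add _ _ hpi]; congr 1; ring
  have e3 : Complex.exp ((π : ℂ) * Complex.I * s / 4) =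
      qa * Complex.exp (-((π : ℂ) * Complex.I * (1 - s) / 4)) := by
    rw [qa, ← Complex.exp_add]; congr 1; ring
  have e4 : (π:ℂ) ^ (-s / 2) = ((π:ℂ) ^ (s / 2))⁻¹ := by
    rw [← Complex.cpow_neg]; congr 1; ring
  rw [m, m, e1, e2, e3, e4]
  have nz2 : (2:ℂ) ^ (s / 2) ≠ 0 := by simp [Complex.cpow_eq_zero_iff]
  have nzp : (π:ℂ) ^ (s / 2) ≠ 0 := by simp [Complex.cpow_eq_zero_iff, hpi]
  have nzr : (π:ℂ) ^ (1 / 2 : ℂ) ≠ 0 := by simp [Complex.cpow_eq_zero_iff, hpi]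
  have key := final_alg (r2 := (2:ℂ) ^ (1/2 : ℂ)) (z := riemannZeta s) (zt := riemannZeta (1 - s))
    (G1 := Gamma (s / 2)) (G2 := Gamma ((1 - s) / 2)) (H1 := Gamma ((1 + s) / 2))
    (H2 := Gamma ((2 - s) / 2)) (Gs := Gamma s) (Gt := Gamma (1 - s))
    (M := ∫ x in Ioi (0:ℝ), (x : ℂ) ^ (s - 1) * phi x)
    (E := Complex.exp (-((π : ℂ) * Complex.I * (1 - s) / 4)))
    nz2 nzp nzr (hG _ (by simp; linarith)) (hG _ (by simp; linarith)) (hG _ hs₀)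
    (hG _ (by simp; linarith)) sqp sq2 qa_mul_qb ?_ ?_ ?_ ?_ (int_sum hs₀ hs₁) ?_
  · rw [key, mul_div_mul_comm]
  · have hA := completedRiemannZeta_one_sub s
    have gA : Gammaℝ s ≠ 0 := Gammaℝ_ne_zero_of_re_pos hs₀
    have gB : Gammaℝ (1 - s) ≠ 0 := Gammaℝ_ne_zero_of_re_pos (by simp; linarith)
    have z1 : Gammaℝ s * riemannZeta s = completedRiemannZeta s := by
      rw [riemannZeta_def_of_ne_zero hs]; field_simp
    have z2 : Gammaℝ (1 - s) * riemannZeta (1 - s) = completedRiemannZeta (1 - s) := by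
      rw [riemannZeta_def_of_ne_zero hst]; field_simp
    rw [hA, ← z1, Gammaℝ_def, Gammaℝ_def, e4] at z2
    rw [← z2]
    congr 2
    rw [← Complex.cpow_sub _ _ hpi]; congr 1; ring
  · have h := func_eq hs₀ hs₁
    have f1 : (π:ℂ) ^ (-((2 - s) / 2)) = (π:ℂ) ^ (s / 2) / π := by
      rw [show -((2 - s) / 2) = s / 2 - 1 by ring, Complex.cpow_sub _ _ hpi, Complex.cpow_one]
    have f2 : (π:ℂ) ^ (-((1 + s) / 2)) = 1 / ((π:ℂ) ^ (1/2 : ℂ) * (π:ℂ) ^ (s / 2)) := by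
      rw [← Complex.cpow_add _ _ hpi, one_div, ← Complex.cpow_neg]; congr 1; ring
    rwa [f1, f2] at h
  · have h := Complex.Gamma_mul_Gamma_add_half (s / 2)
    have f0 : s / 2 + 1 / 2 = (1 + s) / 2 := by ring
    have f1 : 2 * (s / 2) = s := by ring
    have f2 : (2:ℂ) ^ (1 - s) = 2 / ((2:ℂ) ^ (s / 2)) ^ 2 := by
      rw [Complex.cpow_sub _ _ h20, Complex.cpow_one, s2]
    have f3 : ((Real.sqrt π : ℝ) : ℂ) = (π:ℂ) ^ (1/2 : ℂ) := by
      rw [Real.sqrt_eq_rpow, Complex.ofReal_cpow Real.pi_pos.le]; norm_num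
    rwa [f0, f1, f2, f3] at h
  · have h := Complex.Gamma_mul_Gamma_add_half ((1 - s) / 2)
    have f0 : (1 - s) / 2 + 1 / 2 = (2 - s) / 2 := by ring
    have f1 : 2 * ((1 - s) / 2) = 1 - s := by ring
    have f1' : 1 - (1 - s) = s := by ring
    have f3 : ((Real.sqrt π : ℝ) : ℂ) = (π:ℂ) ^ (1/2 : ℂ) := by
      rw [Real.sqrt_eq_rpow, Complex.ofReal_cpow Real.pi_pos.le]; norm_num
    rwa [f0, f1, f1', s2, f3] at h
  · have h1 := gz_rot (s := 1 - s) (by simp; linarith) (by simp; linarith)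
    have h2 := int_gz (s := 1 - s) (by simp; linarith) (by simp; linarith)
    rw [h2, m] at h1
    have f0 : 1 - s - 1 = -s := by ring
    have f1 : -(1 - s) = s - 1 := by ring
    rw [f0, f1, Complex.cpow_sub _ _ h20, Complex.cpow_sub _ _ hpi, Complex.cpow_one, Complex.cpow_one, s2, sp] at h1
    rw [show (π : ℂ) * I * (1 - s) / 4 = (1 - s) * (π * I / 4) by ring, ← h1]
    field_simp
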